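/- arXiv:1507.04626 — 7 statements merged into one kernel-verified Lean document; each statement's English description precedes it below -/
import Mathlib

section
/- Let m > 0, y₀ > 0 and Ȳ ≥ 0. There exist ε₀ > 0 and c > 0, depending only on m, y₀ and Ȳ, such that for every ε ∈ (0, ε₀] the following holds: if y : [0,∞) → [0,∞) is continuous, differentiable on (0,∞), satisfies y(0) = ε y₀, and y'(t) = −2m y(t)² + Y_R(t) for all t > 0, where the source term satisfies |Y_R(t)| ≤ Ȳ ε^{5/2} (1+εt)^{−2} (εt)^{−1/2}, then for all t > 0 one has |y(t) − ε y₀/(1 + 2 m ε y₀ t)| ≤ c Ȳ (ε/(1+εt))^{3/2}. -/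
open Set

/-!
After rescaling time and amplitude the equation becomes `v' = -v² + ρ` with `v 0 = 1`, a
perturbation of the equation solved by `(1 + t)⁻¹`. For every `r`, the weighted deviation
`F t = (1 + t) ^ r * (v t - (1 + t)⁻¹)` satisfies the linear equation
`F' = -(v - (r - 1) (1 + t)⁻¹) F + (1 + t) ^ r ρ`, and the damping coefficient is nonnegative as
long as `|F| < (2 - r) (1 + t) ^ (r - 1)`. A nonnegative primitive of a bound on `(1 + t) ^ r |ρ|`
that stays in that region is therefore a barrier for `|F|`. A source of order
`η (1 + t) ^ (-2) t ^ (-1/2)` requires `3/2 < r < 2`; the choice `r = 7/4` gives the barrier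
`4 η t ^ (1/4)`.
-/

section Comparison

theorem nonpos_of_hasDerivAt_nonpos_of_pos_of_lt {h h' δ : ℝ → ℝ} {a : ℝ}
    (hh : ContinuousOn h (Ici a)) (hδ : ContinuousOn δ (Ici a)) (hδ_pos : ∀ t, a ≤ t → 0 < δ t)
    (ha : h a ≤ 0) (hderiv : ∀ t, a < t → HasDerivAt h (h' t) t)
    (hh' : ∀ t, a < t → 0 < h t → h t < δ t → h' t ≤ 0) {t : ℝ} (ht : a ≤ t) : h t ≤ 0 := by
  have hclosed : IsClosed ({x | h x ≤ 0} ∩ Icc a t) := by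
    rw [inter_comm]
    exact (hh.mono Icc_subset_Ici_self).preimage_isClosed_of_isClosed isClosed_Icc isClosed_Iic
  refine hclosed.Icc_subset_of_forall_exists_gt ha (fun x ⟨hx, hax, _⟩ y hxy => ?_) ⟨ht, le_rfl⟩
  by_contra hempty
  have hpos : ∀ s ∈ Ioc x y, 0 < h s := fun s hs =>
    not_le.1 fun hs' => hempty ⟨s, hs', hs⟩
  have hsub : Ici x ⊆ Ici a := Ici_subset_Ici.2 hax
  have hnear : ∀ᶠ s in nhdsWithin x (Ici x), h s < δ s :=
    ((hh x hax).mono hsub).eventually_lt ((hδ x hax).mono hsub) (hx.trans_lt (hδ_pos x hax))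
  obtain ⟨z, hxz, hz⟩ := mem_nhdsGE_iff_exists_Icc_subset.1 hnear
  have hxw : x < min y z := lt_min hxy hxz
  have hanti : AntitoneOn h (Icc x (min y z)) := by
    refine antitoneOn_of_hasDerivWithinAt_nonpos (f' := h') (convex_Icc _ _)
      (hh.mono (Icc_subset_Ici_self.trans hsub)) (fun s hs => ?_) (fun s hs => ?_)
    all_goals
      rw [interior_Icc] at hs
      have has : a < s := hax.trans_lt hs.1
    · exact (hderiv s has).hasDerivWithinAt
    · have hsyz := le_min_iff.1 hs.2.le
      exact hh' s has (hpos s ⟨hs.1, hsyz.1⟩) (hz ⟨hs.1.le, hsyz.2⟩)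
  have hle : h (min y z) ≤ h x := hanti ⟨le_rfl, hxw.le⟩ ⟨hxw.le, le_rfl⟩ hxw.le
  exact (hpos _ ⟨hxw, min_le_left y z⟩).not_ge (hle.trans hx)

variable {F G M p q g : ℝ → ℝ} {a : ℝ}

-- To exceed `G < M`, the function `F` would first have to enter `G < F < M`, where its damping is
-- nonnegative and `F - G` therefore cannot increase.
theorem le_of_hasDerivAt_damped
    (hF : ContinuousOn F (Ici a)) (hG : ContinuousOn G (Ici a)) (hM : ContinuousOn M (Ici a))
    (hG_nonneg : ∀ t, a ≤ t → 0 ≤ G t) (hGM : ∀ t, a ≤ t → G t < M t) (ha : F a ≤ G a)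
    (hF' : ∀ t, a < t → HasDerivAt F (-p t * F t + q t) t)
    (hG' : ∀ t, a < t → HasDerivAt G (g t) t)
    (hp : ∀ t, a < t → |F t| < M t → 0 ≤ p t) (hq : ∀ t, a < t → q t ≤ g t)
    {t : ℝ} (ht : a ≤ t) : F t ≤ G t := by
  refine sub_nonpos.1 <| nonpos_of_hasDerivAt_nonpos_of_pos_of_lt (h := fun s => F s - G s)
    (δ := fun s => M s - G s) (hF.sub hG) (hM.sub hG) (fun s hs => sub_pos.2 (hGM s hs))
    (sub_nonpos.2 ha) (fun s hs => (hF' s hs).sub (hG' s hs)) (fun s hs hGF hFM => ?_) ht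
  have hF_pos : 0 < F s := (hG_nonneg s hs.le).trans_lt (sub_pos.1 hGF)
  have hdamp : 0 ≤ p s * F s :=
    mul_nonneg (hp s hs ((abs_of_pos hF_pos).trans_lt (by linarith))) hF_pos.le
  linarith [hq s hs]

theorem abs_le_of_hasDerivAt_damped
    (hF : ContinuousOn F (Ici a)) (hG : ContinuousOn G (Ici a)) (hM : ContinuousOn M (Ici a))
    (hG_nonneg : ∀ t, a ≤ t → 0 ≤ G t) (hGM : ∀ t, a ≤ t → G t < M t) (ha : |F a| ≤ G a)
    (hF' : ∀ t, a < t → HasDerivAt F (-p t * F t + q t) t)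
    (hG' : ∀ t, a < t → HasDerivAt G (g t) t)
    (hp : ∀ t, a < t → |F t| < M t → 0 ≤ p t) (hq : ∀ t, a < t → |q t| ≤ g t)
    {t : ℝ} (ht : a ≤ t) : |F t| ≤ G t := by
  refine abs_le'.2 ⟨?_, ?_⟩
  · exact le_of_hasDerivAt_damped hF hG hM hG_nonneg hGM (le_of_abs_le ha) hF' hG' hp
      (fun s hs => le_of_abs_le (hq s hs)) ht
  · exact le_of_hasDerivAt_damped (F := fun s => -F s) (q := fun s => -q s) hF.neg hG hM
      hG_nonneg hGM ((neg_le_abs _).trans ha)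
      (fun s hs => (hF' s hs).neg.congr_deriv (by ring)) hG'
      (fun s hs hs' => hp s hs (by rwa [abs_neg] at hs'))
      (fun s hs => (neg_le_abs _).trans (hq s hs)) ht

end Comparison

/-- The deviation of `v` from `(1 + t)⁻¹`, the solution of `v' = -v²` with `v 0 = 1`, multiplied by
the weight `(1 + t) ^ r` that turns a decay rate into a growth bound. -/
noncomputable def weightedDeviation (r : ℝ) (v : ℝ → ℝ) (t : ℝ) : ℝ :=
  (1 + t) ^ r * (v t - (1 + t)⁻¹)

namespace weightedDeviation

variable {r : ℝ} {v : ℝ → ℝ}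

theorem abs_eq {t : ℝ} (ht : 0 ≤ t) :
    |weightedDeviation r v t| = (1 + t) ^ r * |v t - (1 + t)⁻¹| := by
  rw [weightedDeviation, abs_mul, abs_of_pos (by positivity)]

theorem continuousOn (hv : ContinuousOn v (Ici 0)) :
    ContinuousOn (weightedDeviation r v) (Ici 0) := by
  have hne : ∀ t ∈ Ici (0 : ℝ), 1 + t ≠ 0 := fun t ht => (add_pos_of_pos_of_nonneg one_pos ht).ne'
  have hadd : ContinuousOn (fun t : ℝ => 1 + t) (Ici 0) := by fun_prop
  exact (hadd.rpow_const fun t ht => Or.inl (hne t ht)).mul (hv.sub (hadd.inv₀ hne))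

theorem hasDerivAt {ρ t : ℝ} (ht : 0 < 1 + t) (hv : HasDerivAt v (-v t ^ 2 + ρ) t) :
    HasDerivAt (weightedDeviation r v)
      (-(v t - (r - 1) * (1 + t)⁻¹) * weightedDeviation r v t + (1 + t) ^ r * ρ) t := by
  have hadd : HasDerivAt (fun s : ℝ => 1 + s) 1 t := (hasDerivAt_id t).const_add 1
  have hpow := hadd.rpow_const (p := r) (Or.inl ht.ne')
  refine (hpow.mul (hv.sub (hadd.inv ht.ne'))).congr_deriv ?_
  rw [Real.rpow_sub_one ht.ne', weightedDeviation]
  simp only [Pi.sub_apply, Pi.inv_apply]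
  field_simp
  ring

theorem damping_nonneg {t : ℝ} (ht : 0 < 1 + t)
    (h : |weightedDeviation r v t| < (2 - r) * (1 + t) ^ (r - 1)) :
    0 ≤ v t - (r - 1) * (1 + t)⁻¹ := by
  have hpow : 0 < (1 + t) ^ r := Real.rpow_pos_of_pos ht r
  have hlow : (1 + t) ^ r * -((2 - r) * (1 + t)⁻¹) < (1 + t) ^ r * (v t - (1 + t)⁻¹) := by
    rw [Real.rpow_sub_one ht.ne'] at h
    calc (1 + t) ^ r * -((2 - r) * (1 + t)⁻¹) = -((2 - r) * ((1 + t) ^ r / (1 + t))) := by ring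
      _ < (1 + t) ^ r * (v t - (1 + t)⁻¹) := (abs_lt.1 h).1
  linarith [lt_of_mul_lt_mul_left hlow hpow.le]

end weightedDeviation

section Riccati

variable {v ρ : ℝ → ℝ}

theorem one_add_rpow_mul_abs_sub_inv_le {G g : ℝ → ℝ} {r : ℝ}
    (hv : ContinuousOn v (Ici 0)) (hv0 : v 0 = 1)
    (hv' : ∀ t, 0 < t → HasDerivAt v (-v t ^ 2 + ρ t) t)
    (hG : ContinuousOn G (Ici 0)) (hG_nonneg : ∀ t, 0 ≤ t → 0 ≤ G t)
    (hG_lt : ∀ t, 0 ≤ t → G t < (2 - r) * (1 + t) ^ (r - 1))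
    (hG' : ∀ t, 0 < t → HasDerivAt G (g t) t)
    (hρ : ∀ t, 0 < t → (1 + t) ^ r * |ρ t| ≤ g t) {t : ℝ} (ht : 0 ≤ t) :
    (1 + t) ^ r * |v t - (1 + t)⁻¹| ≤ G t := by
  have hM : ContinuousOn (fun s : ℝ => (2 - r) * (1 + s) ^ (r - 1)) (Ici 0) :=
    .mul (by fun_prop) <| .rpow_const (by fun_prop) fun s hs =>
      Or.inl (add_pos_of_pos_of_nonneg one_pos hs).ne'
  have h0 : |weightedDeviation r v 0| ≤ G 0 := by
    simpa [weightedDeviation, hv0] using hG_nonneg 0 le_rfl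
  rw [← weightedDeviation.abs_eq ht]
  refine abs_le_of_hasDerivAt_damped (weightedDeviation.continuousOn hv) hG hM hG_nonneg hG_lt h0
    (fun s hs => weightedDeviation.hasDerivAt (by linarith) (hv' s hs)) hG'
    (fun s hs => weightedDeviation.damping_nonneg (by linarith)) (fun s hs => ?_) ht
  rw [abs_mul, abs_of_pos (by positivity)]
  exact hρ s hs

theorem abs_sub_inv_one_add_le {η : ℝ} (hη : 0 ≤ η) (hη_lt : 16 * η < 1)
    (hv : ContinuousOn v (Ici 0)) (hv0 : v 0 = 1)
    (hv' : ∀ t, 0 < t → HasDerivAt v (-v t ^ 2 + ρ t) t)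
    (hρ : ∀ t, 0 < t → |ρ t| ≤ η * ((1 + t) ^ (-2 : ℝ) * t ^ (-1 / 2 : ℝ)))
    {t : ℝ} (ht : 0 ≤ t) : |v t - (1 + t)⁻¹| ≤ 4 * η * (1 + t) ^ (-3 / 2 : ℝ) := by
  have hweight : (1 + t) ^ (7 / 4 : ℝ) * |v t - (1 + t)⁻¹| ≤ 4 * η * t ^ (1 / 4 : ℝ) := by
    refine one_add_rpow_mul_abs_sub_inv_le (G := fun s => 4 * η * s ^ (1 / 4 : ℝ))
      (g := fun s => η * s ^ (-3 / 4 : ℝ)) hv hv0 hv' ?_ (fun s hs => by positivity)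
      (fun s hs => ?_) (fun s hs => ?_) (fun s hs => ?_) ht
    · exact .mul (by fun_prop) (.rpow_const (by fun_prop) fun s _ => Or.inr (by norm_num))
    · have hpow : s ^ (1 / 4 : ℝ) ≤ (1 + s) ^ (7 / 4 - 1 : ℝ) :=
        (Real.rpow_le_rpow hs (by linarith) (by norm_num)).trans
          (Real.rpow_le_rpow_of_exponent_le (by linarith) (by norm_num))
      calc 4 * η * s ^ (1 / 4 : ℝ) ≤ 4 * η * (1 + s) ^ (7 / 4 - 1 : ℝ) := by gcongr
        _ < (2 - 7 / 4) * (1 + s) ^ (7 / 4 - 1 : ℝ) := by gcongr; linarith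
    · refine ((Real.hasDerivAt_rpow_const (Or.inl hs.ne')).const_mul (4 * η)).congr_deriv ?_
      norm_num
      ring
    · have hsplit : (1 + s) ^ (7 / 4 : ℝ) * (1 + s) ^ (-2 : ℝ) = (1 + s) ^ (-1 / 4 : ℝ) := by
        rw [← Real.rpow_add (by positivity)]; norm_num
      calc (1 + s) ^ (7 / 4 : ℝ) * |ρ s|
          ≤ (1 + s) ^ (7 / 4 : ℝ) * (η * ((1 + s) ^ (-2 : ℝ) * s ^ (-1 / 2 : ℝ))) := by
            gcongr; exact hρ s hs
        _ = η * ((1 + s) ^ (-1 / 4 : ℝ) * s ^ (-1 / 2 : ℝ)) := by rw [← hsplit]; ring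
        _ ≤ η * (s ^ (-1 / 4 : ℝ) * s ^ (-1 / 2 : ℝ)) := by
            gcongr ?_ * (?_ * _)
            exact Real.rpow_le_rpow_of_nonpos hs (by linarith) (by norm_num)
        _ = η * s ^ (-3 / 4 : ℝ) := by rw [← Real.rpow_add hs]; norm_num
  have hsplit : (1 + t) ^ (1 / 4 : ℝ) = (1 + t) ^ (7 / 4 : ℝ) * (1 + t) ^ (-3 / 2 : ℝ) := by
    rw [← Real.rpow_add (by positivity)]; norm_num
  have hpow : 0 < (1 + t) ^ (7 / 4 : ℝ) := by positivity
  refine le_of_mul_le_mul_left ?_ hpow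
  calc (1 + t) ^ (7 / 4 : ℝ) * |v t - (1 + t)⁻¹| ≤ 4 * η * t ^ (1 / 4 : ℝ) := hweight
    _ ≤ 4 * η * (1 + t) ^ (1 / 4 : ℝ) := by gcongr; linarith
    _ = (1 + t) ^ (7 / 4 : ℝ) * (4 * η * (1 + t) ^ (-3 / 2 : ℝ)) := by rw [hsplit]; ring

theorem hasDerivAt_rescale {y : ℝ → ℝ} {k A R τ : ℝ} (hk : k ≠ 0) (hA : A ≠ 0)
    (hy : HasDerivAt y (-k * y (τ / (k * A)) ^ 2 + R) (τ / (k * A))) :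
    HasDerivAt (fun s => y (s / (k * A)) / A)
      (-(y (τ / (k * A)) / A) ^ 2 + R / (k * A ^ 2)) τ := by
  refine ((hy.comp τ ((hasDerivAt_id τ).div_const (k * A))).div_const A).congr_deriv ?_
  field_simp

theorem abs_sub_div_one_add_le {y R : ℝ → ℝ} {k A η : ℝ} (hk : 0 < k) (hA : 0 < A)
    (hη : 0 ≤ η) (hη_lt : 16 * η < 1) (hy : ContinuousOn y (Ici 0)) (hy0 : y 0 = A)
    (hy' : ∀ t, 0 < t → HasDerivAt y (-k * y t ^ 2 + R t) t)
    (hR : ∀ t, 0 < t →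
      |R t| ≤ k * A ^ 2 * η * ((1 + k * A * t) ^ (-2 : ℝ) * (k * A * t) ^ (-1 / 2 : ℝ)))
    {t : ℝ} (ht : 0 ≤ t) :
    |y t - A / (1 + k * A * t)| ≤ 4 * A * η * (1 + k * A * t) ^ (-3 / 2 : ℝ) := by
  have hkA : 0 < k * A := mul_pos hk hA
  have hcont : ContinuousOn (fun s => y (s / (k * A)) / A) (Ici 0) :=
    (hy.comp (by fun_prop) fun s hs => div_nonneg hs hkA.le).div_const A
  have hbound := abs_sub_inv_one_add_le (ρ := fun s => R (s / (k * A)) / (k * A ^ 2)) hη hη_lt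
    hcont (by simp [hy0, hA.ne'])
    (fun s hs => hasDerivAt_rescale hk.ne' hA.ne' (hy' _ (div_pos hs hkA)))
    (fun s hs => by
      have hRs := hR (s / (k * A)) (div_pos hs hkA)
      rw [mul_div_cancel₀ s hkA.ne'] at hRs
      rw [abs_div, abs_of_pos (by positivity : 0 < k * A ^ 2), div_le_iff₀' (by positivity),
        ← mul_assoc]
      exact hRs)
    (mul_nonneg hkA.le ht)
  rw [mul_div_cancel_left₀ t hkA.ne'] at hbound
  calc |y t - A / (1 + k * A * t)| = A * |y t / A - (1 + k * A * t)⁻¹| := by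
        rw [← abs_of_pos hA, ← abs_mul, abs_of_pos hA, mul_sub, mul_div_cancel₀ _ hA.ne',
          div_eq_mul_inv]
    _ ≤ A * (4 * η * (1 + k * A * t) ^ (-3 / 2 : ℝ)) := by gcongr
    _ = 4 * A * η * (1 + k * A * t) ^ (-3 / 2 : ℝ) := by ring

end Riccati

section Weights

theorem one_add_mul_le_max_mul {a s : ℝ} (hs : 0 ≤ s) : 1 + a * s ≤ max 1 a * (1 + s) := by
  calc 1 + a * s ≤ max 1 a + max 1 a * s := by gcongr <;> simp
    _ = max 1 a * (1 + s) := by ring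

theorem one_add_rpow_le {a s p : ℝ} (ha : 0 ≤ a) (hs : 0 ≤ s) (hp : p ≤ 0) :
    (1 + s) ^ p ≤ max 1 a ^ (-p) * (1 + a * s) ^ p := by
  have hC : 0 < max 1 a := lt_max_of_lt_left one_pos
  calc (1 + s) ^ p = max 1 a ^ (-p) * (max 1 a * (1 + s)) ^ p := by
        rw [Real.mul_rpow hC.le (by positivity), ← mul_assoc, ← Real.rpow_add hC,
          neg_add_cancel, Real.rpow_zero, one_mul]
    _ ≤ max 1 a ^ (-p) * (1 + a * s) ^ p := by
        gcongr _ * ?_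
        exact Real.rpow_le_rpow_of_nonpos (by positivity) (one_add_mul_le_max_mul hs) hp

theorem one_add_mul_rpow_le {a s p : ℝ} (ha : 0 < a) (hs : 0 ≤ s) (hp : p ≤ 0) :
    (1 + a * s) ^ p ≤ max 1 a⁻¹ ^ (-p) * (1 + s) ^ p := by
  simpa only [inv_mul_cancel_left₀ ha.ne'] using
    one_add_rpow_le (inv_nonneg.2 ha.le) (mul_nonneg ha.le hs) hp

theorem one_add_rpow_mul_rpow_le {a s p q : ℝ} (ha : 0 < a) (hs : 0 ≤ s) (hp : p ≤ 0) :
    (1 + s) ^ p * s ^ q ≤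
      max 1 a ^ (-p) * a ^ (-q) * ((1 + a * s) ^ p * (a * s) ^ q) := by
  calc (1 + s) ^ p * s ^ q ≤ max 1 a ^ (-p) * (1 + a * s) ^ p * s ^ q := by
        gcongr; exact one_add_rpow_le ha.le hs hp
    _ = max 1 a ^ (-p) * a ^ (-q) * ((1 + a * s) ^ p * (a * s) ^ q) := by
        rw [Real.mul_rpow ha.le hs, Real.rpow_neg ha.le]
        field_simp

theorem mul_sqrt_lt_one {L ε : ℝ} (hL : 0 ≤ L) (hε : ε ≤ (L + 1)⁻¹ ^ 2) : L * √ε < 1 := by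
  have hsqrt : √ε ≤ (L + 1)⁻¹ := Real.sqrt_le_iff.2 ⟨by positivity, hε⟩
  calc L * √ε ≤ L * (L + 1)⁻¹ := by gcongr
    _ < 1 := by rw [← div_eq_mul_inv, div_lt_one (by positivity)]; exact lt_add_one L

theorem rpow_three_halves {x : ℝ} (hx : 0 ≤ x) : x ^ (3 / 2 : ℝ) = x * √x := by
  rw [Real.sqrt_eq_rpow, ← Real.rpow_one_add' hx (by norm_num)]; norm_num

theorem rpow_five_halves {x : ℝ} (hx : 0 ≤ x) : x ^ (5 / 2 : ℝ) = x ^ 2 * √x := by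
  rw [Real.sqrt_eq_rpow, ← Real.rpow_natCast x 2, ← Real.rpow_add' hx (by norm_num)]; norm_num

end Weights

section SlowTime

variable {m y₀ Ybar ε t : ℝ}

/-- The factor `K` for which the source of amplitude `Ybar` in the slow time `ε t` has, in the
normalised equation `v' = -v² + ρ`, amplitude at most `K * Ybar * √ε`. -/
noncomputable def sourceFactor (m y₀ : ℝ) : ℝ :=
  max 1 (2 * m * y₀) ^ (2 : ℝ) * (2 * m * y₀) ^ (1 / 2 : ℝ) / (2 * m * y₀ ^ 2)

theorem sourceFactor_pos (hm : 0 < m) (hy₀ : 0 < y₀) : 0 < sourceFactor m y₀ := by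
  unfold sourceFactor
  positivity

theorem source_le_normalised (hm : 0 < m) (hy₀ : 0 < y₀) (hY : 0 ≤ Ybar) (hε : 0 < ε)
    (ht : 0 ≤ t) :
    Ybar * ε ^ (5 / 2 : ℝ) * (1 + ε * t) ^ (-2 : ℝ) * (ε * t) ^ (-1 / 2 : ℝ) ≤
      2 * m * (ε * y₀) ^ 2 * (sourceFactor m y₀ * Ybar * √ε) *
        ((1 + 2 * m * (ε * y₀) * t) ^ (-2 : ℝ) * (2 * m * (ε * y₀) * t) ^ (-1 / 2 : ℝ)) := by
  have hslow : 2 * m * (ε * y₀) * t = 2 * m * y₀ * (ε * t) := by ring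
  have hweight := one_add_rpow_mul_rpow_le (a := 2 * m * y₀) (s := ε * t) (p := -2)
    (q := -1 / 2) (by positivity) (by positivity) (by norm_num)
  rw [neg_neg, neg_div, neg_neg, ← neg_div] at hweight
  rw [hslow, rpow_five_halves hε.le, mul_assoc (Ybar * (ε ^ 2 * √ε))]
  refine (mul_le_mul_of_nonneg_left hweight (by positivity)).trans_eq ?_
  rw [sourceFactor]
  field_simp

theorem normalised_bound_le (hm : 0 < m) (hy₀ : 0 < y₀) (hY : 0 ≤ Ybar) (hε : 0 < ε)
    (ht : 0 ≤ t) :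
    4 * (ε * y₀) * (sourceFactor m y₀ * Ybar * √ε) *
        (1 + 2 * m * (ε * y₀) * t) ^ (-3 / 2 : ℝ) ≤
      4 * y₀ * sourceFactor m y₀ * max 1 (2 * m * y₀)⁻¹ ^ (3 / 2 : ℝ) * Ybar *
        (ε / (1 + ε * t)) ^ (3 / 2 : ℝ) := by
  have hslow : 2 * m * (ε * y₀) * t = 2 * m * y₀ * (ε * t) := by ring
  have hK := sourceFactor_pos hm hy₀
  have hweight := one_add_mul_rpow_le (a := 2 * m * y₀) (s := ε * t) (p := -3 / 2)
    (by positivity) (by positivity) (by norm_num)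
  rw [neg_div, neg_neg] at hweight
  rw [hslow, neg_div]
  refine (mul_le_mul_of_nonneg_left hweight (by positivity)).trans_eq ?_
  rw [Real.div_rpow hε.le (by positivity), rpow_three_halves hε.le,
    Real.rpow_neg (by positivity : 0 ≤ 1 + ε * t)]
  ring

end SlowTime

theorem stmt_0_general (m y₀ Ybar : ℝ) (hm : 0 < m) (hy₀ : 0 < y₀) (hY : 0 ≤ Ybar) :
    ∃ ε₀ > (0:ℝ), ∃ c > (0:ℝ), ∀ ε : ℝ, 0 < ε → ε ≤ ε₀ →
      ∀ y YR : ℝ → ℝ,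
        ContinuousOn y (Ici 0) →
        y 0 = ε * y₀ →
        (∀ t, 0 < t → HasDerivAt y (-(2 * m) * (y t) ^ 2 + YR t) t) →
        (∀ t, 0 < t →
          |YR t| ≤ Ybar * ε ^ ((5:ℝ)/2) * (1 + ε * t) ^ (-(2:ℝ)) * (ε * t) ^ (-(1:ℝ)/2)) →
        ∀ t, 0 < t →
          |y t - ε * y₀ / (1 + 2 * m * ε * y₀ * t)| ≤
            c * Ybar * (ε / (1 + ε * t)) ^ ((3:ℝ)/2) := by
  have hK := sourceFactor_pos hm hy₀
  refine ⟨(16 * (sourceFactor m y₀ * Ybar) + 1)⁻¹ ^ 2, by positivity,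
    4 * y₀ * sourceFactor m y₀ * max 1 (2 * m * y₀)⁻¹ ^ (3 / 2 : ℝ), by positivity, ?_⟩
  intro ε hε hε₀ y YR hy hy0 hy' hYR t ht
  have hsmall : 16 * (sourceFactor m y₀ * Ybar * √ε) < 1 := by
    simpa only [mul_assoc] using mul_sqrt_lt_one (by positivity) hε₀
  have hbound := abs_sub_div_one_add_le (k := 2 * m) (by positivity) (mul_pos hε hy₀)
    (by positivity) hsmall hy hy0 hy'
    (fun s hs => (hYR s hs).trans (source_le_normalised hm hy₀ hY hε hs.le)) ht.le
  rw [mul_assoc (2 * m) ε y₀]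
  exact hbound.trans (normalised_bound_le hm hy₀ hY hε ht.le)

/-- Decay lemma for the squared modulus `y = |z₁|²` of the discrete oscillation amplitude:
a nonnegative scalar ODE with quadratic damping `y' = -2m y² + Y_R` and a decaying source. -/
theorem stmt_0 (m y₀ Ybar : ℝ) (hm : 0 < m) (hy₀ : 0 < y₀) (hY : 0 ≤ Ybar) :
    ∃ ε₀ > (0:ℝ), ∃ c > (0:ℝ), ∀ ε : ℝ, 0 < ε → ε ≤ ε₀ →
      ∀ y YR : ℝ → ℝ,
        ContinuousOn y (Ici 0) →
        (∀ t, 0 ≤ t → 0 ≤ y t) →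
        y 0 = ε * y₀ →
        (∀ t, 0 < t → HasDerivAt y (-(2 * m) * (y t) ^ 2 + YR t) t) →
        (∀ t, 0 < t →
          |YR t| ≤ Ybar * ε ^ ((5:ℝ)/2) * (1 + ε * t) ^ (-(2:ℝ)) * (ε * t) ^ (-(1:ℝ)/2)) →
        ∀ t, 0 < t →
          |y t - ε * y₀ / (1 + 2 * m * ε * y₀ * t)| ≤
            c * Ybar * (ε / (1 + ε * t)) ^ ((3:ℝ)/2) := by
  obtain ⟨ε₀, hε₀, c, hc, hbound⟩ := stmt_0_general m y₀ Ybar hm hy₀ hY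
  exact ⟨ε₀, hε₀, c, hc, fun ε hε hle y YR hy _ => hbound ε hε hle y YR hy⟩
end

section
/- Let k > 0, δ ∈ ℝ, C₀ ≥ 0, let ξ : [0,∞) → ℝ be continuous and let Z₁ : [0,∞) → ℂ be continuous with |Z₁(t)| ≤ C₀ (1+t)^{−2} for all t ≥ 0. Suppose z₁ : [0,∞) → ℂ is differentiable and satisfies z₁'(t) = ( i ξ(t) − (1−iδ) k / (2(1+kt)) ) z₁(t) + Z₁(t) for all t ≥ 0. Then the integral z_∞ := z₁(0) + ∫₀^∞ exp(−i∫₀^s ξ(τ)dτ) · (1+ks)^{(1−iδ)/2} Z₁(s) ds converges absolutely, and there exists C' > 0, depending only on C₀, k and δ, such that for all t ≥ 0: | z₁(t) − z_∞ · exp(i∫₀^t ξ(τ)dτ) · (1+kt)^{−(1−iδ)/2} | ≤ C' (1+t)^{−1}. Here (1+kt)^{w} := exp(w·log(1+kt)) for w ∈ ℂ. -/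
open Set MeasureTheory Filter

/-!
Put `a = (1 - iδ) / 2` and `p = 2`. The integrating factor `μ(t) = exp (-i ∫₀ᵗ ξ) (1 + kt)^a`
satisfies `(μ z)' = μ Z`, and `|μ(t)| = (1 + kt)^(Re a)` because `ξ` is real. Since
`Z = O(t^(-p))` with `p > 1 + Re a`, the product `μ Z` is integrable, so `μ z` converges to
`z_∞ = z(0) + ∫₀^∞ μ Z`, and `z(t) - μ(t)⁻¹ z_∞ = -μ(t)⁻¹ ∫ₜ^∞ μ Z`. The powers `Re a` gained in
the tail integral and lost in `μ⁻¹` cancel, which leaves `O(t^(1 - p))`.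
-/

section Integrals

variable {E : Type*} [NormedAddCommGroup E] [NormedSpace ℝ E]

lemma integrableOn_Ioi_const_add_rpow_of_lt {r c m : ℝ} (hr : r < -1) (hc : -m < c) :
    IntegrableOn (fun x : ℝ => (m + x) ^ r) (Ioi c) := by
  simpa only [add_comm] using integrableOn_add_rpow_Ioi_of_lt hr hc

lemma integral_Ioi_const_add_rpow_of_lt {r c m : ℝ} (hr : r < -1) (hc : -m < c) :
    ∫ x in Ioi c, (m + x) ^ r = -(m + c) ^ (r + 1) / (r + 1) := by
  rw [← integral_Ioi_rpow_of_lt hr (neg_lt_iff_pos_add'.mp hc)]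
  simpa only [preimage_const_add_Ioi, add_sub_cancel_left] using
    (measurePreserving_add_left volume m).setIntegral_preimage_emb
      (measurableEmbedding_addLeft m) (fun y => y ^ r) (Ioi (m + c))

lemma norm_integral_Ioi_le_of_norm_le_const_add_rpow {g : ℝ → E} {M r c m : ℝ} (hr : r < -1)
    (hc : -m < c) (hg : ∀ x ∈ Ioi c, ‖g x‖ ≤ M * (m + x) ^ r) :
    ‖∫ x in Ioi c, g x‖ ≤ M * (-(m + c) ^ (r + 1) / (r + 1)) := by
  rw [← integral_Ioi_const_add_rpow_of_lt hr hc, ← integral_const_mul]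
  exact norm_integral_le_of_norm_le ((integrableOn_Ioi_const_add_rpow_of_lt hr hc).const_mul M)
    (ae_restrict_of_forall_mem measurableSet_Ioi hg)

variable [CompleteSpace E]

lemma hasDerivWithinAt_integral_Ici {f : ℝ → E} {a t : ℝ} (hf : ContinuousOn f (Ici a))
    (ht : a ≤ t) : HasDerivWithinAt (fun s => ∫ τ in a..s, f τ) (f t) (Ici a) t := by
  have hcont : Continuous fun s => f (max s a) :=
    hf.comp_continuous (by fun_prop) fun s => le_max_right s a
  have heq : ∀ s ∈ Ici a, ∫ τ in a..s, f τ = ∫ τ in a..s, f (max τ a) := by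
    intro s hs
    refine intervalIntegral.integral_congr fun τ hτ => ?_
    rw [uIcc_of_le hs] at hτ
    simp only [max_eq_left hτ.1]
  have hderiv := (hcont.integral_hasStrictDerivAt a t).hasDerivAt.hasDerivWithinAt (s := Ici a)
  rw [max_eq_left ht] at hderiv
  exact hderiv.congr heq (heq t ht)

-- Measurability of `g` is automatic, since `g` is a derivative on `s`.
lemma integrableOn_of_hasDerivAt_of_norm_le {w g : ℝ → E} {b : ℝ → ℝ} {s : Set ℝ}
    (hs : MeasurableSet s) (hw : ∀ x ∈ s, HasDerivAt w (g x) x) (hg : ∀ x ∈ s, ‖g x‖ ≤ b x)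
    (hb : IntegrableOn b s) : IntegrableOn g s := by
  have hmeas : AEStronglyMeasurable g (volume.restrict s) :=
    (aestronglyMeasurable_deriv w _).congr
      (ae_restrict_of_forall_mem hs fun x hx => (hw x hx).deriv)
  exact hb.mono' hmeas (ae_restrict_of_forall_mem hs hg)

lemma integral_Ioi_sub_integral_Ioi_of_hasDerivAt {w g : ℝ → E} {a b : ℝ} (hab : a ≤ b)
    (hcont : ContinuousOn w (Ici a)) (hw : ∀ x ∈ Ioi a, HasDerivAt w (g x) x)
    (hg : IntegrableOn g (Ioi a)) :
    (∫ x in Ioi a, g x) - ∫ x in Ioi b, g x = w b - w a := by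
  rw [intervalIntegral.integral_Ioi_sub_Ioi hg hab]
  exact intervalIntegral.integral_eq_sub_of_hasDerivAt_of_le hab (hcont.mono Icc_subset_Ici_self)
    (fun x hx => hw x hx.1)
    ((intervalIntegrable_iff_integrableOn_Ioc_of_le hab).2 (hg.mono_set Ioc_subset_Ioi_self))

lemma sub_inv_smul_eq_neg_inv_smul_integral_Ioi {𝕜 : Type*} [DivisionRing 𝕜] [Module 𝕜 E]
    {μ : ℝ → 𝕜} {f z : ℝ → E} {a t : ℝ} (ht : a ≤ t) (hμ : μ t ≠ 0)
    (hderiv : ∀ s, a ≤ s → HasDerivWithinAt (fun s => μ s • z s) (μ s • f s) (Ici a) s)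
    (hint : IntegrableOn (fun s => μ s • f s) (Ioi a)) :
    z t - (μ t)⁻¹ • (μ a • z a + ∫ s in Ioi a, μ s • f s) =
      -((μ t)⁻¹ • ∫ s in Ioi t, μ s • f s) := by
  have hftc := integral_Ioi_sub_integral_Ioi_of_hasDerivAt ht
    (fun s hs => (hderiv s hs).continuousWithinAt)
    (fun s hs => (hderiv s (le_of_lt hs)).hasDerivAt (Ici_mem_nhds hs)) hint
  rw [sub_eq_sub_iff_add_eq_add] at hftc
  rw [add_comm (μ a • z a), hftc, smul_add, inv_smul_smul₀ hμ, sub_add_cancel_left]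

end Integrals

lemma exists_one_add_mul_rpow_le {k : ℝ} (hk : 0 < k) (r : ℝ) :
    ∃ c > 0, ∀ t : ℝ, 0 ≤ t → (1 + k * t) ^ r ≤ c * (1 + t) ^ r := by
  rcases le_total 0 r with hr | hr
  · refine ⟨(1 + k) ^ r, by positivity, fun t ht => ?_⟩
    rw [← Real.mul_rpow (by positivity) (by positivity)]
    exact Real.rpow_le_rpow (by positivity) (by nlinarith) hr
  · refine ⟨(min 1 k) ^ r, by positivity, fun t ht => ?_⟩
    rw [← Real.mul_rpow (by positivity) (by positivity)]
    refine Real.rpow_le_rpow_of_nonpos (by positivity) ?_ hr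
    nlinarith [min_le_left 1 k, mul_le_mul_of_nonneg_right (min_le_right 1 k) ht]

/-- The integrating factor `exp (-i ∫₀ᵗ ξ) (1 + kt)^a` of the linear equation
`z' = (iξ - ak / (1 + kt)) z + f`. The complex power is written as `exp (a log (1 + kt))`. -/
noncomputable def integratingFactor (ξ : ℝ → ℝ) (k : ℝ) (a : ℂ) (t : ℝ) : ℂ :=
  Complex.exp (-Complex.I * ((∫ τ in (0 : ℝ)..t, ξ τ : ℝ) : ℂ)) *
    Complex.exp (a * ((Real.log (1 + k * t) : ℝ) : ℂ))

namespace integratingFactor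

variable {ξ : ℝ → ℝ} {k t : ℝ} {a : ℂ}

lemma apply_zero : integratingFactor ξ k a 0 = 1 := by
  simp [integratingFactor]

lemma ne_zero : integratingFactor ξ k a t ≠ 0 :=
  mul_ne_zero (Complex.exp_ne_zero _) (Complex.exp_ne_zero _)

lemma inv_eq : (integratingFactor ξ k a t)⁻¹ =
    Complex.exp (Complex.I * ((∫ τ in (0 : ℝ)..t, ξ τ : ℝ) : ℂ)) *
      Complex.exp (-a * ((Real.log (1 + k * t) : ℝ) : ℂ)) := by
  simp only [integratingFactor, mul_inv, ← Complex.exp_neg, neg_mul, neg_neg]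

lemma norm_eq (hkt : 0 < 1 + k * t) : ‖integratingFactor ξ k a t‖ = (1 + k * t) ^ a.re := by
  simp [integratingFactor, Complex.norm_exp, Real.rpow_def_of_pos hkt, mul_comm]

lemma hasDerivWithinAt (hξ : ContinuousOn ξ (Ici 0)) (ht : 0 ≤ t) (hkt : 1 + k * t ≠ 0) :
    HasDerivWithinAt (integratingFactor ξ k a)
      (-(Complex.I * ξ t - a * k / (1 + k * t)) * integratingFactor ξ k a t) (Ici 0) t := by
  have hphase := ((hasDerivWithinAt_integral_Ici hξ ht).ofReal_comp.const_mul (-Complex.I)).cexp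
  have hlog : HasDerivAt (fun s : ℝ => Real.log (1 + k * s)) (k / (1 + k * t)) t := by
    simpa using (((hasDerivAt_id t).const_mul k).const_add 1).log hkt
  have hpow := (hlog.hasDerivWithinAt (s := Ici 0).ofReal_comp.const_mul a).cexp
  refine (hphase.mul hpow).congr_deriv ?_
  simp only [integratingFactor]
  push_cast
  ring

variable {E : Type*} [NormedAddCommGroup E] [NormedSpace ℂ E] {f z : ℝ → E}

lemma hasDerivWithinAt_smul (hξ : ContinuousOn ξ (Ici 0)) (ht : 0 ≤ t) (hkt : 1 + k * t ≠ 0)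
    (hz : HasDerivWithinAt z ((Complex.I * ξ t - a * k / (1 + k * t)) • z t + f t) (Ici 0) t) :
    HasDerivWithinAt (fun s => integratingFactor ξ k a s • z s)
      (integratingFactor ξ k a t • f t) (Ici 0) t := by
  refine ((hasDerivWithinAt hξ ht hkt).smul hz).congr_deriv ?_
  module

lemma norm_smul_le {c C p : ℝ} {v : E} (ht : 0 ≤ t) (hkt : 0 < 1 + k * t)
    (hc : (1 + k * t) ^ a.re ≤ c * (1 + t) ^ a.re) (hv : ‖v‖ ≤ C * (1 + t) ^ (-p)) :
    ‖integratingFactor ξ k a t • v‖ ≤ C * c * (1 + t) ^ (a.re - p) := by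
  rw [norm_smul, norm_eq hkt]
  calc (1 + k * t) ^ a.re * ‖v‖ ≤ (c * (1 + t) ^ a.re) * (C * (1 + t) ^ (-p)) :=
        mul_le_mul hc hv (norm_nonneg v) ((Real.rpow_nonneg hkt.le _).trans hc)
    _ = C * c * (1 + t) ^ (a.re - p) := by
      rw [sub_eq_add_neg, Real.rpow_add (by positivity)]
      ring

end integratingFactor

theorem stmt_1_general {E : Type*} [NormedAddCommGroup E] [NormedSpace ℂ E] [CompleteSpace E]
    {k p : ℝ} {a : ℂ} (hk : 0 < k) (hp : 1 + a.re < p) :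
    ∃ K > (0 : ℝ), ∀ (C : ℝ) (ξ : ℝ → ℝ) (f z : ℝ → E),
      ContinuousOn ξ (Ici 0) →
      (∀ t : ℝ, 0 ≤ t → ‖f t‖ ≤ C * (1 + t) ^ (-p)) →
      (∀ t : ℝ, 0 ≤ t → HasDerivWithinAt z
        ((Complex.I * ξ t - a * k / (1 + k * t)) • z t + f t) (Ici 0) t) →
      IntegrableOn (fun s => integratingFactor ξ k a s • f s) (Ioi 0) ∧
      ∀ t : ℝ, 0 ≤ t →
        ‖z t - (integratingFactor ξ k a t)⁻¹ •
          (z 0 + ∫ s in Ioi (0 : ℝ), integratingFactor ξ k a s • f s)‖ ≤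
            C * K * (1 + t) ^ (1 - p) := by
  obtain ⟨c₁, hc₁, hpow⟩ := exists_one_add_mul_rpow_le hk a.re
  obtain ⟨c₂, hc₂, hpow_neg⟩ := exists_one_add_mul_rpow_le hk (-a.re)
  have hgap : 0 < p - 1 - a.re := by linarith
  refine ⟨c₁ * c₂ / (p - 1 - a.re), by positivity, fun C ξ f z hξ hf hz => ?_⟩
  have hderiv (s : ℝ) (hs : 0 ≤ s) :=
    integratingFactor.hasDerivWithinAt_smul hξ hs (by positivity) (hz s hs)
  have hbound (s : ℝ) (hs : 0 ≤ s) :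
      ‖integratingFactor ξ k a s • f s‖ ≤ C * c₁ * (1 + s) ^ (a.re - p) :=
    integratingFactor.norm_smul_le hs (by positivity) (hpow s hs) (hf s hs)
  have hrate : a.re - p < -1 := by linarith
  have hint : IntegrableOn (fun s => integratingFactor ξ k a s • f s) (Ioi 0) :=
    integrableOn_of_hasDerivAt_of_norm_le measurableSet_Ioi
      (fun s hs => (hderiv s (le_of_lt hs)).hasDerivAt (Ici_mem_nhds hs))
      (fun s hs => hbound s (le_of_lt hs))
      ((integrableOn_Ioi_const_add_rpow_of_lt hrate (neg_lt_zero.mpr one_pos)).const_mul _)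
  refine ⟨hint, fun t ht => ?_⟩
  have htail := norm_integral_Ioi_le_of_norm_le_const_add_rpow hrate (by linarith : -1 < t)
    fun s hs => hbound s (ht.trans (le_of_lt hs))
  have hinv : ‖(integratingFactor ξ k a t)⁻¹‖ ≤ c₂ * (1 + t) ^ (-a.re) := by
    rw [norm_inv, integratingFactor.norm_eq (by positivity), ← Real.rpow_neg (by positivity)]
    exact hpow_neg t ht
  have htail_eq :=
    sub_inv_smul_eq_neg_inv_smul_integral_Ioi ht integratingFactor.ne_zero hderiv hint
  rw [integratingFactor.apply_zero, one_smul] at htail_eq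
  rw [htail_eq, norm_neg, norm_smul]
  calc _ ≤ (c₂ * (1 + t) ^ (-a.re)) *
        (C * c₁ * (-(1 + t) ^ (a.re - p + 1) / (a.re - p + 1))) := by gcongr
    _ = C * (c₁ * c₂ / (p - 1 - a.re)) * ((1 + t) ^ (-a.re) * (1 + t) ^ (a.re - p + 1)) := by
      rw [show a.re - p + 1 = -(p - 1 - a.re) by ring, neg_div_neg_eq]
      ring
    _ = C * (c₁ * c₂ / (p - 1 - a.re)) * (1 + t) ^ (1 - p) := by
      rw [← Real.rpow_add (by positivity)]
      ring_nf

/-- Large-time asymptotics for the amplitude `z₁` of the discrete mode after the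
normal-form transformation: `z₁' = (iξ(t) - (1-iδ)k/(2(1+kt))) z₁ + Z₁(t)` with
`|Z₁(t)| ≤ C₀ (1+t)⁻²`.  Here `(1+kt)^w := exp(w log(1+kt))` for complex `w`. -/
theorem stmt_1 (k δ C₀ : ℝ) (hk : 0 < k) (hC₀ : 0 ≤ C₀) :
    ∃ C' > (0:ℝ), ∀ (ξ : ℝ → ℝ) (Z₁ z₁ : ℝ → ℂ),
      ContinuousOn ξ (Ici 0) →
      ContinuousOn Z₁ (Ici 0) →
      (∀ t : ℝ, 0 ≤ t → ‖Z₁ t‖ ≤ C₀ * (1 + t) ^ (-(2:ℝ))) →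
      (∀ t : ℝ, 0 ≤ t → HasDerivWithinAt z₁
        ((Complex.I * (ξ t : ℂ)
            - (1 - Complex.I * (δ : ℂ)) * (k : ℂ) / (2 * (1 + (k : ℂ) * (t : ℂ)))) * z₁ t
          + Z₁ t) (Ici 0) t) →
      IntegrableOn
        (fun s : ℝ => Complex.exp (-(Complex.I) * ((∫ τ in (0:ℝ)..s, ξ τ : ℝ) : ℂ)) *
          Complex.exp (((1 - Complex.I * (δ : ℂ)) / 2) * ((Real.log (1 + k * s) : ℝ) : ℂ)) *
          Z₁ s) (Ioi 0) ∧
      ∀ t : ℝ, 0 ≤ t →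
        ‖z₁ t -
          (z₁ 0 + ∫ s in Ioi (0:ℝ),
              Complex.exp (-(Complex.I) * ((∫ τ in (0:ℝ)..s, ξ τ : ℝ) : ℂ)) *
                Complex.exp (((1 - Complex.I * (δ : ℂ)) / 2) *
                  ((Real.log (1 + k * s) : ℝ) : ℂ)) * Z₁ s) *
            Complex.exp (Complex.I * ((∫ τ in (0:ℝ)..t, ξ τ : ℝ) : ℂ)) *
            Complex.exp (-((1 - Complex.I * (δ : ℂ)) / 2) *
              ((Real.log (1 + k * t) : ℝ) : ℂ))‖
          ≤ C' * (1 + t)⁻¹ := by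
  have hre : 1 + ((1 - Complex.I * (δ : ℂ)) / 2).re < 2 := by norm_num
  obtain ⟨K, hK, hsol⟩ := stmt_1_general (E := ℂ) hk hre
  refine ⟨C₀ * K + 1, by positivity, fun ξ Z₁ z₁ hξ _ hZ₁ hz₁ => ?_⟩
  obtain ⟨hint, hlim⟩ := hsol C₀ ξ Z₁ z₁ hξ hZ₁ fun t ht => by
    simpa only [smul_eq_mul, div_mul_eq_mul_div, div_div] using hz₁ t ht
  refine ⟨hint, fun t ht => ?_⟩
  calc _ ≤ C₀ * K * (1 + t) ^ (1 - 2 : ℝ) := by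
        rw [mul_assoc (z₁ 0 + _), mul_comm (z₁ 0 + _), ← integratingFactor.inv_eq]
        exact hlim t ht
    _ ≤ (C₀ * K + 1) * (1 + t)⁻¹ := by
      rw [show (1 - 2 : ℝ) = -1 by norm_num, Real.rpow_neg_one]
      gcongr
      linarith
end

section
/- There exists an absolute constant c > 0 such that for every ε ∈ (0,1] and every t ≥ 0 one has ∫₀^t (1+t−s)^{−3/2} · (ε/(1+εs))^{3/2} ds ≤ c (ε/(1+εt))^{3/2}. -/
/-!
Put `u = 1 + t - s` and `v = ε⁻¹ + s`, so that the integrand is `u⁻ᵖ v⁻ᵖ` with `p = 3/2`, while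
`u + v ≥ ε⁻¹ + t` does not depend on `s`. From `u⁻¹ v⁻¹ = (u + v)⁻¹ (u⁻¹ + v⁻¹)` and the convexity
of `x ↦ xᵖ` one gets `u⁻ᵖ v⁻ᵖ ≤ 2ᵖ⁻¹ (u + v)⁻ᵖ (u⁻ᵖ + v⁻ᵖ)`. As `1 < p`, the integrals of `u⁻ᵖ` and
`v⁻ᵖ` over `[0, t]` are at most `1 / (p - 1)` and `εᵖ⁻¹ / (p - 1)`.
-/

open Set

theorem add_rpow_le_two_rpow_mul {p x y : ℝ} (hp : 1 ≤ p) (hx : 0 ≤ x) (hy : 0 ≤ y) :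
    (x + y) ^ p ≤ 2 ^ (p - 1) * (x ^ p + y ^ p) := by
  lift x to NNReal using hx
  lift y to NNReal using hy
  exact_mod_cast NNReal.rpow_add_le_mul_rpow_add_rpow x y hp

theorem rpow_neg_mul_rpow_neg_le {p u v : ℝ} (hp : 1 ≤ p) (hu : 0 < u) (hv : 0 < v) :
    u ^ (-p) * v ^ (-p) ≤ 2 ^ (p - 1) * (u + v) ^ (-p) * (u ^ (-p) + v ^ (-p)) := by
  have inv_mul_inv_eq : u⁻¹ * v⁻¹ = (u + v)⁻¹ * (u⁻¹ + v⁻¹) := by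
    field_simp
    ring
  simp only [Real.rpow_neg_eq_inv_rpow]
  calc u⁻¹ ^ p * v⁻¹ ^ p
      = (u + v)⁻¹ ^ p * (u⁻¹ + v⁻¹) ^ p := by
        rw [← Real.mul_rpow (by positivity) (by positivity), inv_mul_inv_eq,
          Real.mul_rpow (by positivity) (by positivity)]
    _ ≤ (u + v)⁻¹ ^ p * (2 ^ (p - 1) * (u⁻¹ ^ p + v⁻¹ ^ p)) := by
        gcongr
        exact add_rpow_le_two_rpow_mul hp (by positivity) (by positivity)
    _ = 2 ^ (p - 1) * (u + v)⁻¹ ^ p * (u⁻¹ ^ p + v⁻¹ ^ p) := by ring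

theorem continuousOn_add_rpow {a : ℝ} (ha : 0 < a) (r : ℝ) :
    ContinuousOn (fun s : ℝ ↦ (a + s) ^ r) (Ici 0) :=
  ContinuousOn.rpow_const (by fun_prop) fun _ hs ↦ .inl (add_pos_of_pos_of_nonneg ha hs).ne'

theorem integral_add_rpow_neg_le {p a t : ℝ} (hp : 1 < p) (ha : 0 < a) (ht : 0 ≤ t) :
    ∫ s in 0..t, (a + s) ^ (-p) ≤ a ^ (1 - p) / (p - 1) := by
  have zero_notMem : (0 : ℝ) ∉ uIcc a (a + t) := notMem_uIcc_of_lt ha (by linarith)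
  calc ∫ s in 0..t, (a + s) ^ (-p)
      = ((a + t) ^ (-p + 1) - a ^ (-p + 1)) / (-p + 1) := by
        rw [intervalIntegral.integral_comp_add_left (fun x ↦ x ^ (-p)), add_zero,
          integral_rpow (.inr ⟨by linarith, zero_notMem⟩)]
    _ = (a ^ (1 - p) - (a + t) ^ (1 - p)) / (p - 1) := by
        rw [neg_add_eq_sub, ← neg_div_neg_eq, neg_sub, neg_sub]
    _ ≤ a ^ (1 - p) / (p - 1) := by
        have : 0 < p - 1 := sub_pos.mpr hp
        gcongr
        exact sub_le_self _ (by positivity)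

theorem integral_rpow_neg_mul_rpow_neg_le {p a b t : ℝ} (hp : 1 < p) (ha : 0 < a) (hb : 0 < b)
    (ht : 0 ≤ t) :
    ∫ s in 0..t, (a + (t - s)) ^ (-p) * (b + s) ^ (-p) ≤
      2 ^ (p - 1) / (p - 1) * (a ^ (1 - p) + b ^ (1 - p)) * (a + b + t) ^ (-p) := by
  set K := 2 ^ (p - 1) * (a + b + t) ^ (-p)
  have pointwise_le : ∀ s ∈ Icc 0 t, (a + (t - s)) ^ (-p) * (b + s) ^ (-p) ≤
      K * ((a + (t - s)) ^ (-p) + (b + s) ^ (-p)) := fun s hs ↦ by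
    have := rpow_neg_mul_rpow_neg_le hp.le
      (add_pos_of_pos_of_nonneg ha (sub_nonneg.mpr hs.2)) (add_pos_of_pos_of_nonneg hb hs.1)
    rwa [show a + (t - s) + (b + s) = a + b + t by ring] at this
  have hcont_reflect : ContinuousOn (fun s ↦ (a + (t - s)) ^ (-p)) (uIcc 0 t) := by
    rw [uIcc_of_le ht]
    exact (continuousOn_add_rpow ha (-p)).comp (by fun_prop) fun s hs ↦ sub_nonneg.mpr hs.2
  have hcont_shift : ContinuousOn (fun s ↦ (b + s) ^ (-p)) (uIcc 0 t) := by
    rw [uIcc_of_le ht]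
    exact (continuousOn_add_rpow hb (-p)).mono Icc_subset_Ici_self
  have integral_reflect : ∫ s in 0..t, (a + (t - s)) ^ (-p) = ∫ s in 0..t, (a + s) ^ (-p) := by
    rw [intervalIntegral.integral_comp_sub_left (fun x ↦ (a + x) ^ (-p)), sub_self, sub_zero]
  calc ∫ s in 0..t, (a + (t - s)) ^ (-p) * (b + s) ^ (-p)
      ≤ ∫ s in 0..t, K * ((a + (t - s)) ^ (-p) + (b + s) ^ (-p)) :=
        intervalIntegral.integral_mono_on ht (hcont_reflect.mul hcont_shift).intervalIntegrable
          ((hcont_reflect.add hcont_shift).const_mul K).intervalIntegrable pointwise_le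
    _ = K * ((∫ s in 0..t, (a + s) ^ (-p)) + ∫ s in 0..t, (b + s) ^ (-p)) := by
        rw [intervalIntegral.integral_const_mul, intervalIntegral.integral_add
          hcont_reflect.intervalIntegrable hcont_shift.intervalIntegrable, integral_reflect]
    _ ≤ K * (a ^ (1 - p) / (p - 1) + b ^ (1 - p) / (p - 1)) := by
        gcongr
        · exact integral_add_rpow_neg_le hp ha ht
        · exact integral_add_rpow_neg_le hp hb ht
    _ = 2 ^ (p - 1) / (p - 1) * (a ^ (1 - p) + b ^ (1 - p)) * (a + b + t) ^ (-p) := by ring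

theorem div_one_add_mul_rpow {ε : ℝ} (hε : ε ≠ 0) (s p : ℝ) :
    (ε / (1 + ε * s)) ^ p = (ε⁻¹ + s) ^ (-p) := by
  rw [Real.rpow_neg_eq_inv_rpow, ← inv_div, add_div, one_div, mul_div_cancel_left₀ s hε]

theorem stmt_2_general {p M : ℝ} (hp : 1 < p) (hM : 0 < M) :
    ∃ c > (0 : ℝ), ∀ ε : ℝ, 0 < ε → ε ≤ M → ∀ t : ℝ, 0 ≤ t →
      (∫ s in (0 : ℝ)..t, (1 + t - s) ^ (-p) * (ε / (1 + ε * s)) ^ p)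
        ≤ c * (ε / (1 + ε * t)) ^ p := by
  have : 0 < p - 1 := sub_pos.mpr hp
  refine ⟨2 ^ (p - 1) / (p - 1) * (1 + M ^ (p - 1)), by positivity, fun ε hε hεM t ht ↦ ?_⟩
  have inv_rpow_le : ε⁻¹ ^ (1 - p) ≤ M ^ (p - 1) := by
    rw [← neg_sub p, Real.rpow_neg_eq_inv_rpow, inv_inv]
    gcongr
  simp only [div_one_add_mul_rpow hε.ne', add_sub_assoc]
  calc ∫ s in 0..t, (1 + (t - s)) ^ (-p) * (ε⁻¹ + s) ^ (-p)
      ≤ 2 ^ (p - 1) / (p - 1) * (1 ^ (1 - p) + ε⁻¹ ^ (1 - p)) * (1 + ε⁻¹ + t) ^ (-p) :=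
        integral_rpow_neg_mul_rpow_neg_le hp one_pos (inv_pos.mpr hε) ht
    _ ≤ 2 ^ (p - 1) / (p - 1) * (1 + M ^ (p - 1)) * (ε⁻¹ + t) ^ (-p) := by
        rw [Real.one_rpow]
        gcongr ?_ * (1 + ?_) * ?_
        exact Real.rpow_le_rpow_of_nonpos (by positivity) (by linarith) (by linarith)

/-- Convolution inequality behind the Duhamel estimate for the continuous-spectrum
component: `∫₀ᵗ (1+t-s)^{-3/2} (ε/(1+εs))^{3/2} ds ≤ c (ε/(1+εt))^{3/2}`. -/
theorem stmt_2 : ∃ c > (0:ℝ), ∀ ε : ℝ, 0 < ε → ε ≤ 1 → ∀ t : ℝ, 0 ≤ t →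
    (∫ s in (0:ℝ)..t, (1 + t - s) ^ (-(3:ℝ)/2) * (ε / (1 + ε * s)) ^ ((3:ℝ)/2))
      ≤ c * (ε / (1 + ε * t)) ^ ((3:ℝ)/2) := by
  simpa only [neg_div] using stmt_2_general (p := 3 / 2) (by norm_num) one_pos
end

section
/- (Cubic Poincaré normal form.) Let ξ ∈ ℝ ∖ {0} and Z₂₀, Z₁₁, Z₀₂, Z₃₀, Z₂₁, Z₁₂, Z₀₃ ∈ ℂ. Set c₂₀ = iZ₂₀/ξ, c₁₁ = −iZ₁₁/ξ, c₀₂ = −iZ₀₂/(3ξ), and iK = Z₂₁ + (i/ξ)Z₂₀Z₁₁ − (i/ξ)|Z₁₁|² − (2i/(3ξ))|Z₀₂|². Then there exist c₃₀, c₁₂, c₀₃ ∈ ℂ and a constant C > 0, depending only on ξ and on the coefficients Z_{jk}, with the following property: whenever z : [0,T] → ℂ is differentiable, |z(t)| ≤ 1 for all t, and ż(t) = iξ z + Z₂₀z² + Z₁₁ z z̄ + Z₀₂ z̄² + Z₃₀ z³ + Z₂₁ z² z̄ + Z₁₂ z z̄² + Z₀₃ z̄³ + R(t) for a continuous R : [0,T]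 → ℂ, the function z₁ := z + c₂₀z² + c₁₁ z z̄ + c₀₂ z̄² + c₃₀ z³ + c₁₂ z z̄² + c₀₃ z̄³ satisfies, for all t ∈ [0,T], | ż₁(t) − iξ z₁(t) − iK |z₁(t)|² z₁(t) | ≤ C ( |R(t)| + |z(t)|⁴ ). -/
open Set

/-- The transformed variable `z₁` of the cubic Poincaré normal form, with
`c₂₀ = iZ₂₀/ξ`, `c₁₁ = -iZ₁₁/ξ`, `c₀₂ = -iZ₀₂/(3ξ)` and free cubic coefficients
`c₃₀, c₁₂, c₀₃`. -/
noncomputable def normalFormVar (ξ : ℝ) (Z20 Z11 Z02 c30 c12 c03 : ℂ)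
    (z : ℝ → ℂ) (s : ℝ) : ℂ :=
  z s + (Complex.I * Z20 / (ξ : ℂ)) * z s ^ 2
      + (-(Complex.I) * Z11 / (ξ : ℂ)) * (z s * (starRingEnd ℂ) (z s))
      + (-(Complex.I) * Z02 / (3 * (ξ : ℂ))) * (starRingEnd ℂ) (z s) ^ 2
      + c30 * z s ^ 3 + c12 * (z s * (starRingEnd ℂ) (z s) ^ 2)
      + c03 * (starRingEnd ℂ) (z s) ^ 3

/-!
For `φ = id + P₂ + P₃` and a field `F = az + F₂ + F₃` with `a` purely imaginary, the terms of
`Dφ(z)[F(z)] - aφ(z) - iK|φ(z)|²φ(z)` of degree two and three vanish exactly when `P₂` and `P₃`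
solve the homological equations `DP₂[az] - aP₂ = -F₂` and
`DP₃[az] - aP₃ = -(F₃ + DP₂[F₂]) + iK|z|²z`. The operator `P ↦ DP[az] - aP` is diagonal on the
monomials `zʲz̄ᵏ`, with eigenvalues `a(j - k - 1)`. Hence every quadratic monomial can be removed,
and every cubic one except `z²z̄`, whose coefficient in `F₃ + DP₂[F₂]` is `iK`. What remains is of
degree at least four, and `R` enters linearly, through the bounded operator `Dφ(z)`.
-/

open Asymptotics Filter Metric
open Finset.HasAntidiagonal (antidiagonal mem_antidiagonal)
open scoped ComplexConjugate

theorem isBigO_norm_pow_of_le {E : Type*} [SeminormedAddCommGroup E] (M : ℝ)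
    {m n : ℕ} (hmn : m ≤ n) :
    (fun x : E => ‖x‖ ^ n) =O[𝓟 (closedBall 0 M)] fun x => ‖x‖ ^ m := by
  refine isBigO_principal.mpr ⟨M ^ (n - m), fun x hx => ?_⟩
  rw [mem_closedBall_zero_iff] at hx
  rw [norm_pow, norm_pow, norm_norm, ← pow_sub_mul_pow ‖x‖ hmn]
  gcongr

theorem norm_norm_sq_smul_sub_le {E : Type*} [SeminormedAddCommGroup E] [NormedSpace ℝ E]
    (u v : E) :
    ‖‖u‖ ^ 2 • u - ‖v‖ ^ 2 • v‖ ≤ ‖u - v‖ * (‖u‖ ^ 2 + ‖u‖ * ‖v‖ + ‖v‖ ^ 2) := by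
  calc ‖‖u‖ ^ 2 • u - ‖v‖ ^ 2 • v‖
      = ‖((‖u‖ - ‖v‖) * (‖u‖ + ‖v‖)) • v + ‖u‖ ^ 2 • (u - v)‖ := by
        congr 1
        module
    _ ≤ |‖u‖ - ‖v‖| * (‖u‖ + ‖v‖) * ‖v‖ + ‖u‖ ^ 2 * ‖u - v‖ := by
        refine (norm_add_le _ _).trans_eq ?_
        rw [norm_smul, norm_smul, norm_mul, norm_pow, norm_norm, Real.norm_eq_abs,
          Real.norm_of_nonneg (by positivity : 0 ≤ ‖u‖ + ‖v‖)]
    _ ≤ ‖u - v‖ * (‖u‖ + ‖v‖) * ‖v‖ + ‖u‖ ^ 2 * ‖u - v‖ := by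
        gcongr
        exact abs_norm_sub_norm_le u v
    _ = ‖u - v‖ * (‖u‖ ^ 2 + ‖u‖ * ‖v‖ + ‖v‖ ^ 2) := by ring

section ConjForm

/-- The homogeneous polynomial `∑_{j+k=n} c_{jk} zʲ z̄ᵏ` of degree `n` in `z` and `z̄`, where
`c_{jk}` is `c (j, k)`. Entries of `c` off the antidiagonal `j + k = n` are ignored, so that a
single `c` can hold the coefficients of several degrees. -/
noncomputable def conjForm (n : ℕ) (c : ℕ × ℕ → ℂ) (z : ℂ) : ℂ :=
  ∑ p ∈ antidiagonal n, c p * (z ^ p.1 * conj z ^ p.2)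

variable (n : ℕ) (c : ℕ × ℕ → ℂ)

theorem conjForm_two (z : ℂ) :
    conjForm 2 c z = c (2, 0) * z ^ 2 + c (1, 1) * (z * conj z) + c (0, 2) * conj z ^ 2 := by
  simp only [conjForm, Finset.Nat.sum_antidiagonal_eq_sum_range_succ_mk, Finset.sum_range_succ,
    Finset.sum_range_zero]
  ring

theorem conjForm_three (z : ℂ) :
    conjForm 3 c z = c (3, 0) * z ^ 3 + c (2, 1) * (z ^ 2 * conj z)
      + c (1, 2) * (z * conj z ^ 2) + c (0, 3) * conj z ^ 3 := by
  simp only [conjForm, Finset.Nat.sum_antidiagonal_eq_sum_range_succ_mk, Finset.sum_range_succ,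
    Finset.sum_range_zero]
  ring

theorem differentiable_conjForm : Differentiable ℝ (conjForm n c) := by
  unfold conjForm
  fun_prop

theorem fderiv_conjForm_apply (z v : ℂ) :
    fderiv ℝ (conjForm n c) z v = ∑ p ∈ antidiagonal n,
      c p * (p.1 * z ^ (p.1 - 1) * conj z ^ p.2 * v
        + p.2 * z ^ p.1 * conj z ^ (p.2 - 1) * conj v) := by
  have hconj : HasFDerivAt (𝕜 := ℝ) (fun w : ℂ => conj w) (Complex.conjCLE : ℂ →L[ℝ] ℂ) z :=
    Complex.conjCLE.hasFDerivAt
  have hmonomial (p : ℕ × ℕ) :=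
    (((hasFDerivAt_id (𝕜 := ℝ) z).pow p.1).mul (hconj.pow p.2)).const_mul (c p)
  have hsum := HasFDerivAt.fun_sum fun p (_ : p ∈ antidiagonal n) => hmonomial p
  rw [show fderiv ℝ (conjForm n c) z = _ from hsum.fderiv, sum_apply]
  refine Finset.sum_congr rfl fun p _ => ?_
  simp only [id_eq, nsmul_eq_mul, smul_add, add_apply, smul_apply,
    ContinuousLinearEquiv.coe_coe, ContinuousAlgEquiv.coeCLE_apply, Complex.conjCAE_apply,
    smul_eq_mul, ContinuousLinearMap.id_apply]
  ring

theorem fderiv_conjForm_two_apply (z v : ℂ) :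
    fderiv ℝ (conjForm 2 c) z v = (2 * c (2, 0) * z + c (1, 1) * conj z) * v
      + (c (1, 1) * z + 2 * c (0, 2) * conj z) * conj v := by
  simp only [fderiv_conjForm_apply, Finset.Nat.sum_antidiagonal_eq_sum_range_succ_mk,
    Finset.sum_range_succ, Finset.sum_range_zero]
  push_cast
  ring

theorem fderiv_conjForm_mul_self {a : ℂ} (ha : conj a = -a) (z : ℂ) :
    fderiv ℝ (conjForm n c) z (a * z) = conjForm n (fun p => a * (p.1 - p.2) * c p) z := by
  rw [fderiv_conjForm_apply, conjForm]
  refine Finset.sum_congr rfl fun p _ => ?_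
  have euler (m : ℕ) (w : ℂ) : (m : ℂ) * w ^ (m - 1) * w = m * w ^ m := by
    cases m <;> simp [pow_succ, mul_assoc]
  rw [map_mul, ha]
  linear_combination c p * a * (conj z ^ p.2 * euler p.1 z - z ^ p.1 * euler p.2 (conj z))

variable (l : Filter ℂ)

theorem isBigO_conjForm : conjForm n c =O[l] fun z => ‖z‖ ^ n := by
  refine IsBigO.fun_sum fun p hp => ?_
  rw [← mem_antidiagonal.mp hp]
  exact IsBigO.const_mul_left (.of_norm_le fun z => by simp [pow_add]) (c p)

theorem norm_fderiv_conjForm_le (z : ℂ) :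
    ‖fderiv ℝ (conjForm (n + 1) c) z‖
      ≤ (∑ p ∈ antidiagonal (n + 1), ‖c p‖ * (n + 1)) * ‖z‖ ^ n := by
  refine ContinuousLinearMap.opNorm_le_bound _ (by positivity) fun v => ?_
  rw [fderiv_conjForm_apply, Finset.sum_mul, Finset.sum_mul]
  refine norm_sum_le_of_le _ fun p hp => ?_
  obtain ⟨j, k⟩ := p
  have hjk : j + k = n + 1 := mem_antidiagonal.mp hp
  have hj : j * ‖z‖ ^ (j - 1) * ‖z‖ ^ k = j * ‖z‖ ^ n := by
    obtain rfl | hj := Nat.eq_zero_or_pos j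
    · simp
    · rw [mul_assoc, ← pow_add, show j - 1 + k = n by lia]
  have hk : k * ‖z‖ ^ j * ‖z‖ ^ (k - 1) = k * ‖z‖ ^ n := by
    obtain rfl | hk := Nat.eq_zero_or_pos k
    · simp
    · rw [mul_assoc, ← pow_add, show j + (k - 1) = n by lia]
  calc _ ≤ ‖c (j, k)‖ * (j * ‖z‖ ^ (j - 1) * ‖z‖ ^ k * ‖v‖
          + k * ‖z‖ ^ j * ‖z‖ ^ (k - 1) * ‖v‖) := by
        rw [norm_mul]
        gcongr
        exact (norm_add_le _ _).trans_eq (by simp)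
    _ = ‖c (j, k)‖ * ((j + k : ℕ) : ℝ) * ‖z‖ ^ n * ‖v‖ := by
        rw [hj, hk]
        push_cast
        ring
    _ = _ := by
        rw [hjk]
        push_cast
        ring

theorem isBigO_fderiv_conjForm :
    fderiv ℝ (conjForm (n + 1) c) =O[l] fun z => ‖z‖ ^ n :=
  .of_bound _ (.of_forall fun z => by simpa using norm_fderiv_conjForm_le n c z)

variable {l} {g : ℂ → ℂ} {k : ℕ}

theorem isBigO_fderiv_conjForm_apply (hg : g =O[l] fun z => ‖z‖ ^ k) :
    (fun z => fderiv ℝ (conjForm (n + 1) c) z (g z)) =O[l] fun z => ‖z‖ ^ (n + k) := by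
  simp only [pow_add]
  exact (IsBigO.of_norm_le fun z => (fderiv ℝ (conjForm (n + 1) c) z).le_opNorm (g z)).trans
    ((isBigO_fderiv_conjForm n c l).norm_left.mul hg.norm_left)

end ConjForm

section HomologicalEquation

/-- The coefficients of the solution `P = conjForm n (homologicalSolution a b)` of the homological
equation `DP(z)[az] - aP(z) = -conjForm n b z` for the purely imaginary linear part `z ↦ az`. The
resonant monomials `zᵏ⁺¹z̄ᵏ`, which the equation cannot remove, get the coefficient `0`. -/
noncomputable def homologicalSolution (a : ℂ) (b : ℕ × ℕ → ℂ) (p : ℕ × ℕ) : ℂ :=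
  if p.1 = p.2 + 1 then 0 else -b p / (a * (p.1 - p.2 - 1))

variable {a : ℂ} (ha : conj a = -a) (ha₀ : a ≠ 0)
include ha ha₀

theorem homologicalSolution_spec (n : ℕ) (b : ℕ × ℕ → ℂ) (z : ℂ) :
    fderiv ℝ (conjForm n (homologicalSolution a b)) z (a * z)
        - a * conjForm n (homologicalSolution a b) z
      = conjForm n (fun p => if p.1 = p.2 + 1 then b p else 0) z - conjForm n b z := by
  rw [fderiv_conjForm_mul_self n _ ha]
  simp only [conjForm, Finset.mul_sum, ← Finset.sum_sub_distrib]
  refine Finset.sum_congr rfl fun p _ => ?_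
  by_cases hp : p.1 = p.2 + 1
  · simp [homologicalSolution, hp]
  · have hne : (p.1 - p.2 - 1 : ℂ) ≠ 0 := by
      rw [sub_sub, sub_ne_zero]
      exact_mod_cast hp
    simp only [homologicalSolution, if_neg hp]
    field_simp
    ring

theorem homologicalSolution_spec_two (b : ℕ × ℕ → ℂ) (z : ℂ) :
    fderiv ℝ (conjForm 2 (homologicalSolution a b)) z (a * z)
        - a * conjForm 2 (homologicalSolution a b) z = -conjForm 2 b z := by
  rw [homologicalSolution_spec ha ha₀, conjForm_two]
  simp

theorem homologicalSolution_spec_three (b : ℕ × ℕ → ℂ) (z : ℂ) :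
    fderiv ℝ (conjForm 3 (homologicalSolution a b)) z (a * z)
        - a * conjForm 3 (homologicalSolution a b) z
      = b (2, 1) * (((‖z‖ ^ 2 : ℝ) : ℂ) * z) - conjForm 3 b z := by
  have hnorm : ((‖z‖ ^ 2 : ℝ) : ℂ) = z * conj z := by simp [Complex.mul_conj']
  rw [homologicalSolution_spec ha ha₀, hnorm, conjForm_three]
  simp only [zero_add, OfNat.ofNat_ne_one, ↓reduceIte, zero_mul, Nat.reduceAdd,
    OfNat.one_ne_ofNat, add_zero, OfNat.zero_ne_ofNat]
  ring

end HomologicalEquation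

section NearIdentity

/-- The near-identity change of variables with quadratic part `conjForm 2 c` and cubic part
`conjForm 3 d`. -/
noncomputable def nearIdentity (c d : ℕ × ℕ → ℂ) (z : ℂ) : ℂ :=
  z + conjForm 2 c z + conjForm 3 d z

variable (c d : ℕ × ℕ → ℂ) (M : ℝ)

theorem differentiable_nearIdentity : Differentiable ℝ (nearIdentity c d) :=
  (differentiable_id.add (differentiable_conjForm 2 c)).add (differentiable_conjForm 3 d)

theorem fderiv_nearIdentity (z : ℂ) :
    fderiv ℝ (nearIdentity c d) z
      = .id ℝ ℂ + fderiv ℝ (conjForm 2 c) z + fderiv ℝ (conjForm 3 d) z :=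
  (((hasFDerivAt_id z).add (differentiable_conjForm 2 c z).hasFDerivAt).add
    (differentiable_conjForm 3 d z).hasFDerivAt).fderiv

theorem isBigO_nearIdentity_sub_id :
    (fun z => nearIdentity c d z - z) =O[𝓟 (closedBall 0 M)] fun z => ‖z‖ ^ 2 := by
  have hcubic := (isBigO_conjForm 3 d _).trans (isBigO_norm_pow_of_le M (Nat.le_succ 2))
  refine ((isBigO_conjForm 2 c _).add hcubic).congr_left fun z => ?_
  rw [nearIdentity]
  ring

theorem isBigO_fderiv_nearIdentity :
    fderiv ℝ (nearIdentity c d) =O[𝓟 (closedBall 0 M)] fun _ => (1 : ℝ) := by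
  have hform (n : ℕ) (b : ℕ × ℕ → ℂ) :
      fderiv ℝ (conjForm (n + 1) b) =O[𝓟 (closedBall 0 M)] fun _ => (1 : ℝ) := by
    simpa using (isBigO_fderiv_conjForm n b _).trans (isBigO_norm_pow_of_le M (Nat.zero_le n))
  rw [funext (fderiv_nearIdentity c d)]
  exact ((isBigO_const_const _ one_ne_zero _).add (hform 1 c)).add (hform 2 d)

theorem isBigO_norm_sq_mul_nearIdentity_sub :
    (fun z => ((‖nearIdentity c d z‖ ^ 2 : ℝ) : ℂ) * nearIdentity c d z
        - ((‖z‖ ^ 2 : ℝ) : ℂ) * z) =O[𝓟 (closedBall 0 M)] fun z => ‖z‖ ^ 4 := by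
  set φ := nearIdentity c d
  have hsub : (fun z => ‖φ z - z‖) =O[𝓟 (closedBall 0 M)] fun z => ‖z‖ ^ 2 :=
    (isBigO_nearIdentity_sub_id c d M).norm_left
  have hid : (fun z : ℂ => ‖z‖) =O[𝓟 (closedBall 0 M)] fun z => ‖z‖ := isBigO_refl _ _
  have hφ : (fun z => ‖φ z‖) =O[𝓟 (closedBall 0 M)] fun z => ‖z‖ := by
    have hlinear := (isBigO_nearIdentity_sub_id c d M).trans (isBigO_norm_pow_of_le M one_le_two)
    simp only [pow_one] at hlinear
    simpa using (hlinear.add hid.of_norm_left).norm_left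
  have hfactor : (fun z => ‖φ z‖ ^ 2 + ‖φ z‖ * ‖z‖ + ‖z‖ ^ 2)
      =O[𝓟 (closedBall 0 M)] fun z => ‖z‖ ^ 2 :=
    ((hφ.pow 2).add ((hφ.mul hid).congr_right fun z => (sq _).symm)).add (hid.pow 2)
  refine (IsBigO.of_norm_le fun z => ?_).trans
    ((hsub.mul hfactor).congr_right fun z => (pow_add _ 2 2).symm)
  simpa only [Complex.real_smul] using norm_norm_sq_smul_sub_le (φ z) z

end NearIdentity

section NormalForm

/-- The cubic coefficients `b` of the vector field with coefficients `Z` once the substitution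
`z + conjForm 2 c z` has been made: `conjForm 3 b z = conjForm 3 Z z + DP(z)[conjForm 2 Z z]` with
`P = conjForm 2 c`. -/
noncomputable def cubicCoeff (c Z : ℕ × ℕ → ℂ) : ℕ × ℕ → ℂ
  | (3, 0) => Z (3, 0) + 2 * c (2, 0) * Z (2, 0) + c (1, 1) * conj (Z (0, 2))
  | (2, 1) => Z (2, 1) + 2 * c (2, 0) * Z (1, 1) + c (1, 1) * (Z (2, 0) + conj (Z (1, 1)))
      + 2 * c (0, 2) * conj (Z (0, 2))
  | (1, 2) => Z (1, 2) + 2 * c (2, 0) * Z (0, 2) + c (1, 1) * (Z (1, 1) + conj (Z (2, 0)))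
      + 2 * c (0, 2) * conj (Z (1, 1))
  | (0, 3) => Z (0, 3) + c (1, 1) * Z (0, 2) + 2 * c (0, 2) * conj (Z (2, 0))
  | _ => 0

theorem conjForm_cubicCoeff (c Z : ℕ × ℕ → ℂ) (z : ℂ) :
    conjForm 3 (cubicCoeff c Z) z
      = conjForm 3 Z z + fderiv ℝ (conjForm 2 c) z (conjForm 2 Z z) := by
  simp only [fderiv_conjForm_two_apply, conjForm_two, conjForm_three, cubicCoeff, map_add,
    map_mul, map_pow, Complex.conj_conj]
  ring

/-- The polynomial vector field `az + ∑_{2 ≤ j+k ≤ 3} Z_{jk} zʲ z̄ᵏ`. -/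
noncomputable def cubicField (a : ℂ) (Z : ℕ × ℕ → ℂ) (z : ℂ) : ℂ :=
  a * z + conjForm 2 Z z + conjForm 3 Z z

/-- The cubic coefficients of the change of variables `z ↦ z₁`: they solve the homological equation
for the cubic terms left after the quadratic ones are removed. -/
noncomputable def normalFormCubic (a : ℂ) (Z : ℕ × ℕ → ℂ) : ℕ × ℕ → ℂ :=
  homologicalSolution a (cubicCoeff (homologicalSolution a Z) Z)

/-- The change of variables `z ↦ z₁` that brings `cubicField a Z` into normal form. -/
noncomputable def normalFormMap (a : ℂ) (Z : ℕ × ℕ → ℂ) : ℂ → ℂ :=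
  nearIdentity (homologicalSolution a Z) (normalFormCubic a Z)

/-- The coefficient `iK` of the resonant term in the normal form of `cubicField a Z`. -/
noncomputable def resonantCoeff (a : ℂ) (Z : ℕ × ℕ → ℂ) : ℂ :=
  cubicCoeff (homologicalSolution a Z) Z (2, 1)

variable {a : ℂ} (ha : conj a = -a) (ha₀ : a ≠ 0) (Z : ℕ × ℕ → ℂ)
include ha ha₀

theorem fderiv_normalFormMap_cubicField (z : ℂ) :
    fderiv ℝ (normalFormMap a Z) z (cubicField a Z z)
      = a * normalFormMap a Z z + resonantCoeff a Z * (((‖z‖ ^ 2 : ℝ) : ℂ) * z)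
        + fderiv ℝ (conjForm 2 (homologicalSolution a Z)) z (conjForm 3 Z z)
        + fderiv ℝ (conjForm 3 (normalFormCubic a Z)) z (conjForm 2 Z z + conjForm 3 Z z) := by
  have hquad := homologicalSolution_spec_two ha ha₀ Z z
  have hcubic := homologicalSolution_spec_three ha ha₀ (cubicCoeff (homologicalSolution a Z) Z) z
  have hcoeff := conjForm_cubicCoeff (homologicalSolution a Z) Z z
  simp only [fderiv_nearIdentity, cubicField, normalFormMap, normalFormCubic, nearIdentity,
    resonantCoeff, map_add, add_apply, ContinuousLinearMap.id_apply]
  linear_combination hquad + hcubic - hcoeff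

theorem isBigO_normalFormMap_defect (M : ℝ) :
    (fun z => fderiv ℝ (normalFormMap a Z) z (cubicField a Z z) - a * normalFormMap a Z z
        - resonantCoeff a Z * ((‖normalFormMap a Z z‖ ^ 2 : ℝ) : ℂ) * normalFormMap a Z z)
      =O[𝓟 (closedBall 0 M)] fun z => ‖z‖ ^ 4 := by
  have htail : (fun z => conjForm 2 Z z + conjForm 3 Z z)
      =O[𝓟 (closedBall 0 M)] fun z => ‖z‖ ^ 2 :=
    (isBigO_conjForm 2 Z _).add
      ((isBigO_conjForm 3 Z _).trans (isBigO_norm_pow_of_le M (Nat.le_succ 2)))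
  have hquad := isBigO_fderiv_conjForm_apply 1 (homologicalSolution a Z)
    (isBigO_conjForm 3 Z (𝓟 (closedBall 0 M)))
  have hcubic := isBigO_fderiv_conjForm_apply 2 (normalFormCubic a Z) htail
  have hresonant := (isBigO_norm_sq_mul_nearIdentity_sub (homologicalSolution a Z)
    (normalFormCubic a Z) M).const_mul_left (resonantCoeff a Z)
  refine ((hquad.add hcubic).sub hresonant).congr_left fun z => ?_
  rw [fderiv_normalFormMap_cubicField ha ha₀, normalFormMap]
  ring

theorem exists_norm_normalFormMap_defect_le (M : ℝ) :
    ∃ C : ℝ, 0 < C ∧ ∀ z r : ℂ, ‖z‖ ≤ M →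
      ‖fderiv ℝ (normalFormMap a Z) z (cubicField a Z z + r) - a * normalFormMap a Z z
          - resonantCoeff a Z * ((‖normalFormMap a Z z‖ ^ 2 : ℝ) : ℂ) * normalFormMap a Z z‖
        ≤ C * (‖r‖ + ‖z‖ ^ 4) := by
  obtain ⟨A, hA, hdefect⟩ := (isBigO_normalFormMap_defect ha ha₀ Z M).exists_pos
  obtain ⟨B, hB, hfderiv⟩ : ∃ B > 0, IsBigOWith B _ (fderiv ℝ (normalFormMap a Z)) _ :=
    (isBigO_fderiv_nearIdentity _ _ M).exists_pos
  rw [isBigOWith_principal] at hdefect hfderiv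
  refine ⟨max A B, lt_max_of_lt_left hA, fun z r hz => ?_⟩
  rw [← mem_closedBall_zero_iff] at hz
  have hr := (fderiv ℝ (normalFormMap a Z) z).le_of_opNorm_le
    (by simpa using hfderiv z hz) r
  have hz₄ := hdefect z hz
  rw [norm_pow, norm_norm] at hz₄
  calc _ ≤ B * ‖r‖ + A * ‖z‖ ^ 4 := by
        rw [map_add, add_comm, add_sub_assoc, add_sub_assoc]
        exact norm_add_le_of_le hr hz₄
    _ ≤ max A B * ‖r‖ + max A B * ‖z‖ ^ 4 := by
        gcongr
        exacts [le_max_right A B, le_max_left A B]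
    _ = _ := by ring

end NormalForm

section OscillatorCoefficients

/-- The coefficients `Z_{jk}` of the quadratic and cubic terms, as a function of `(j, k)`. -/
def coeffTable (Z20 Z11 Z02 Z30 Z21 Z12 Z03 : ℂ) : ℕ × ℕ → ℂ
  | (2, 0) => Z20
  | (1, 1) => Z11
  | (0, 2) => Z02
  | (3, 0) => Z30
  | (2, 1) => Z21
  | (1, 2) => Z12
  | (0, 3) => Z03
  | _ => 0

variable (ξ : ℝ) (Z : ℕ × ℕ → ℂ)

theorem homologicalSolution_I_mul {p : ℕ × ℕ} (hp : p.1 ≠ p.2 + 1) :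
    homologicalSolution (Complex.I * ξ) Z p = Complex.I * Z p / (ξ * (p.1 - p.2 - 1)) := by
  rw [homologicalSolution, if_neg hp, mul_assoc, div_mul_eq_div_div, Complex.div_I]
  ring

theorem normalFormVar_eq (z : ℝ → ℂ) :
    normalFormVar ξ (Z (2, 0)) (Z (1, 1)) (Z (0, 2)) (normalFormCubic (Complex.I * ξ) Z (3, 0))
        (normalFormCubic (Complex.I * ξ) Z (1, 2)) (normalFormCubic (Complex.I * ξ) Z (0, 3)) z
      = normalFormMap (Complex.I * ξ) Z ∘ z := by
  have hresonant : normalFormCubic (Complex.I * ξ) Z (2, 1) = 0 := by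
    simp [normalFormCubic, homologicalSolution]
  funext s
  simp only [normalFormVar, Function.comp_apply, normalFormMap, nearIdentity, conjForm_two,
    conjForm_three, hresonant]
  repeat rw [homologicalSolution_I_mul _ _ (by decide)]
  push_cast
  ring

theorem resonantCoeff_I_mul :
    resonantCoeff (Complex.I * ξ) Z
      = Z (2, 1) + Complex.I / (ξ : ℂ) * (Z (2, 0) * Z (1, 1))
          - Complex.I / (ξ : ℂ) * ((‖Z (1, 1)‖ ^ 2 : ℝ) : ℂ)
          - 2 * Complex.I / (3 * (ξ : ℂ)) * ((‖Z (0, 2)‖ ^ 2 : ℝ) : ℂ) := by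
  simp only [resonantCoeff, cubicCoeff]
  repeat rw [homologicalSolution_I_mul _ _ (by decide)]
  push_cast
  rw [← Complex.mul_conj', ← Complex.mul_conj']
  ring

end OscillatorCoefficients

theorem stmt_4_general (ξ : ℝ) (hξ : ξ ≠ 0) (Z20 Z11 Z02 Z30 Z21 Z12 Z03 : ℂ) :
    ∃ c30 c12 c03 : ℂ, ∀ M : ℝ, ∃ C : ℝ, 0 < C ∧
      ∀ (S : Set ℝ) (z : ℝ → ℂ) (t : ℝ) (r : ℂ),
        ‖z t‖ ≤ M →
        HasDerivWithinAt z
          (Complex.I * (ξ : ℂ) * z t + Z20 * z t ^ 2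
            + Z11 * (z t * conj (z t)) + Z02 * conj (z t) ^ 2
            + Z30 * z t ^ 3 + Z21 * (z t ^ 2 * conj (z t))
            + Z12 * (z t * conj (z t) ^ 2) + Z03 * conj (z t) ^ 3 + r) S t →
        ∃ d : ℂ,
          HasDerivWithinAt (normalFormVar ξ Z20 Z11 Z02 c30 c12 c03 z) d S t ∧
          ‖d - Complex.I * (ξ : ℂ) * normalFormVar ξ Z20 Z11 Z02 c30 c12 c03 z t
             - (Z21 + Complex.I / (ξ : ℂ) * (Z20 * Z11)
                 - Complex.I / (ξ : ℂ) * ((‖Z11‖ ^ 2 : ℝ) : ℂ)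
                 - 2 * Complex.I / (3 * (ξ : ℂ)) * ((‖Z02‖ ^ 2 : ℝ) : ℂ))
               * ((‖normalFormVar ξ Z20 Z11 Z02 c30 c12 c03 z t‖ ^ 2 : ℝ) : ℂ)
               * normalFormVar ξ Z20 Z11 Z02 c30 c12 c03 z t‖
            ≤ C * (‖r‖ + ‖z t‖ ^ 4) := by
  let a : ℂ := Complex.I * ξ
  let Z := coeffTable Z20 Z11 Z02 Z30 Z21 Z12 Z03
  have ha : conj a = -a := by simp [a]
  have ha₀ : a ≠ 0 := mul_ne_zero Complex.I_ne_zero (Complex.ofReal_ne_zero.mpr hξ)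
  refine ⟨normalFormCubic a Z (3, 0), normalFormCubic a Z (1, 2), normalFormCubic a Z (0, 3),
    fun M => ?_⟩
  obtain ⟨C, hC, hdefect⟩ := exists_norm_normalFormMap_defect_le ha ha₀ Z M
  refine ⟨C, hC, fun S z t r hz hderiv => ?_⟩
  have hfield : HasDerivWithinAt z (cubicField a Z (z t) + r) S t := by
    refine hderiv.congr_deriv ?_
    simp only [cubicField, conjForm_two, conjForm_three, Z, a, coeffTable]
    ring
  have hvar := normalFormVar_eq ξ Z z
  have hK := resonantCoeff_I_mul ξ Z
  simp only [Z, coeffTable] at hvar hK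
  rw [hvar, ← hK]
  exact ⟨_, ((differentiable_nearIdentity _ _) (z t)).hasFDerivAt.comp_hasDerivWithinAt t hfield,
    hdefect (z t) r hz⟩

/-- Cubic Poincaré normal form: a degree-three polynomial change of variables removes all
nonresonant quadratic and cubic monomials from `ż = iξz + (quadratic) + (cubic) + R`,
leaving only the resonant term `iK|z₁|²z₁` with
`iK = Z₂₁ + (i/ξ)Z₂₀Z₁₁ - (i/ξ)|Z₁₁|² - (2i/(3ξ))|Z₀₂|²`,
up to a remainder bounded by `C(|R| + |z|⁴)`. -/
theorem stmt_4 (ξ : ℝ) (hξ : ξ ≠ 0) (Z20 Z11 Z02 Z30 Z21 Z12 Z03 : ℂ) :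
    ∃ (c30 c12 c03 : ℂ) (C : ℝ), 0 < C ∧
      ∀ (T : ℝ) (z R : ℝ → ℂ),
        ContinuousOn R (Icc 0 T) →
        (∀ t ∈ Icc (0:ℝ) T, ‖z t‖ ≤ 1) →
        (∀ t ∈ Icc (0:ℝ) T, HasDerivWithinAt z
          (Complex.I * (ξ : ℂ) * z t + Z20 * z t ^ 2
            + Z11 * (z t * (starRingEnd ℂ) (z t)) + Z02 * (starRingEnd ℂ) (z t) ^ 2
            + Z30 * z t ^ 3 + Z21 * (z t ^ 2 * (starRingEnd ℂ) (z t))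
            + Z12 * (z t * (starRingEnd ℂ) (z t) ^ 2) + Z03 * (starRingEnd ℂ) (z t) ^ 3
            + R t) (Icc 0 T) t) →
        ∀ t ∈ Icc (0:ℝ) T,
          ∃ d : ℂ,
            HasDerivWithinAt (normalFormVar ξ Z20 Z11 Z02 c30 c12 c03 z) d (Icc 0 T) t ∧
            ‖d - Complex.I * (ξ : ℂ) * normalFormVar ξ Z20 Z11 Z02 c30 c12 c03 z t
               - (Z21 + Complex.I / (ξ : ℂ) * (Z20 * Z11)
                   - Complex.I / (ξ : ℂ) * ((‖Z11‖ ^ 2 : ℝ) : ℂ)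
                   - 2 * Complex.I / (3 * (ξ : ℂ)) * ((‖Z02‖ ^ 2 : ℝ) : ℂ))
                 * ((‖normalFormVar ξ Z20 Z11 Z02 c30 c12 c03 z t‖ ^ 2 : ℝ) : ℂ)
                 * normalFormVar ξ Z20 Z11 Z02 c30 c12 c03 z t‖
              ≤ C * (‖R t‖ + ‖z t‖ ^ 4) := by
  obtain ⟨c30, c12, c03, h⟩ := stmt_4_general ξ hξ Z20 Z11 Z02 Z30 Z21 Z12 Z03
  obtain ⟨C, hC, hbound⟩ := h 1
  exact ⟨c30, c12, c03, C, hC, fun T z R _ hz hderiv t ht =>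
    hbound (Icc 0 T) z t (R t) (hz t ht) (hderiv t ht)⟩
end

section
/- Let σ ∈ (1/√2, 1), ω > 0, set ξ = 2σ√(1−σ²)·ω and b = −(√(1−σ²)+1)/σ, and define on ℝ³∖{0} the functions Ψ₁(x) = e^{−√(ω−ξ)|x|}/(4π|x|) + b·e^{−√(ω+ξ)|x|}/(4π|x|) and Ψ₂(x) = i·( e^{−√(ω−ξ)|x|}/(4π|x|) − b·e^{−√(ω+ξ)|x|}/(4π|x|) ). Then: (i) 0 < ξ < ω, so the exponents are real and positive; (ii) for every x ≠ 0: −ΔΨ₁(x) + ωΨ₁(x) = −iξΨ₂(x) and −ΔΨ₂(x) + ωΨ₂(x) = iξΨ₁(x); (iii) the boundary conditions hold: lim_{x→0} ( Ψ₁(x) − (1+b)/(4π|x|) ) = −(2σ+1)·(√ω/(4π))·(1+b) and lim_{x→0} ( Ψ₂(x) − i(1−b)/(4π|x|) ) = −(√ω/(4π))·i·(1−b). -/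
open Real Filter

/-- The pointwise Laplacian on `ℝ³`: `Δf(x) = ∑ᵢ D²f(x)(eᵢ, eᵢ)`. -/
noncomputable def lap3 {F : Type*} [NormedAddCommGroup F] [NormedSpace ℝ F]
    (f : EuclideanSpace ℝ (Fin 3) → F) (x : EuclideanSpace ℝ (Fin 3)) : F :=
  ∑ i : Fin 3, iteratedFDeriv ℝ 2 f x ![EuclideanSpace.single i 1, EuclideanSpace.single i 1]

/-- First component of the eigenfunction associated to `iξ`. -/
noncomputable def Psi1 (ω ξ b : ℝ) (x : EuclideanSpace ℝ (Fin 3)) : ℂ :=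
  ((Real.exp (-(Real.sqrt (ω - ξ)) * ‖x‖) / (4 * Real.pi * ‖x‖)
      + b * (Real.exp (-(Real.sqrt (ω + ξ)) * ‖x‖) / (4 * Real.pi * ‖x‖)) : ℝ) : ℂ)

/-- Second component of the eigenfunction associated to `iξ`. -/
noncomputable def Psi2 (ω ξ b : ℝ) (x : EuclideanSpace ℝ (Fin 3)) : ℂ :=
  Complex.I * ((Real.exp (-(Real.sqrt (ω - ξ)) * ‖x‖) / (4 * Real.pi * ‖x‖)
      - b * (Real.exp (-(Real.sqrt (ω + ξ)) * ‖x‖) / (4 * Real.pi * ‖x‖)) : ℝ) : ℂ)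

/-!
In dimension three the Laplacian of the radial function `u(|x|) / |x|` is `u''(|x|) / |x|`, so the
Yukawa potential `G_k(x) = e^{-k|x|} / (4π|x|)` satisfies `Δ G_k = k² G_k` away from the origin,
while `G_k(x) = 1 / (4π|x|) - k / (4π) + o(1)` at the origin. Both components of `Ψ` are
combinations of `G_k` and `G_l` with `k² = ω - ξ` and `l² = ω + ξ`, which gives the eigenvalue
system. Writing `s = √(1 - σ²)`, the relation `σ² + s² = 1` turns `ω ∓ ξ` into `ω (σ ∓ s)²`, hence
`k = √ω (σ - s)` and `l = √ω (σ + s)`, and each boundary condition becomes a rational identity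
in `σ` and `s`.
-/

open Topology InnerProductSpace Laplacian

section RadialFunctions

variable {E F : Type*} [NormedAddCommGroup E] [InnerProductSpace ℝ E]
  [NormedAddCommGroup F] [NormedSpace ℝ F] {x : E}

theorem hasFDerivAt_norm (hx : x ≠ 0) :
    HasFDerivAt (fun y : E ↦ ‖y‖) (‖x‖⁻¹ • innerSL ℝ x) x := by
  have h := (hasStrictFDerivAt_norm_sq x).hasFDerivAt.sqrt (by positivity)
  simp only [Real.sqrt_sq (norm_nonneg _)] at h
  refine h.congr_fderiv ?_
  rw [← Nat.cast_smul_eq_nsmul ℝ, smul_smul]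
  congr 1
  field_simp
  norm_num

theorem hasFDerivAt_comp_norm {f : ℝ → F} {f' : F} (hx : x ≠ 0) (hf : HasDerivAt f f' ‖x‖) :
    HasFDerivAt (fun y : E ↦ f ‖y‖) ((innerSL ℝ x).smulRight (‖x‖⁻¹ • f')) x := by
  refine (hf.hasFDerivAt.comp x (hasFDerivAt_norm hx)).congr_fderiv ?_
  ext v
  simp [smul_smul, mul_comm]

theorem iteratedFDeriv_two_comp_norm_apply {f f' : ℝ → F} {f'' : F} (hx : x ≠ 0)
    (hf : ∀ᶠ r in 𝓝 ‖x‖, HasDerivAt f (f' r) r) (hf' : HasDerivAt f' f'' ‖x‖) (v : E) :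
    iteratedFDeriv ℝ 2 (fun y : E ↦ f ‖y‖) x ![v, v] =
      (⟪x, v⟫_ℝ ^ 2 / ‖x‖ ^ 2) • f'' +
        (‖v‖ ^ 2 / ‖x‖ - ⟪x, v⟫_ℝ ^ 2 / ‖x‖ ^ 3) • f' ‖x‖ := by
  have hnorm : ‖x‖ ≠ 0 := norm_ne_zero_iff.mpr hx
  have hfderiv : fderiv ℝ (fun y : E ↦ f ‖y‖) =ᶠ[𝓝 x]
      fun y ↦ ContinuousLinearMap.smulRightL ℝ E F (innerSL ℝ y) (‖y‖⁻¹ • f' ‖y‖) := by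
    filter_upwards [isOpen_ne.mem_nhds hx, continuous_norm.continuousAt.eventually hf] with y hy hfy
    exact (hasFDerivAt_comp_norm hy hfy).fderiv
  have hcoeff := hasFDerivAt_comp_norm hx ((hasDerivAt_inv hnorm).smul hf')
  have hsecond := ((ContinuousLinearMap.smulRightL ℝ E F).comp
    (innerSL ℝ (E := E))).hasFDerivAt.clm_apply hcoeff
  rw [iteratedFDeriv_two_apply, hfderiv.fderiv_eq]
  calc
    _ = ⟪x, v⟫_ℝ • ⟪x, v⟫_ℝ • ‖x‖⁻¹ • (‖x‖⁻¹ • f'' + (-(‖x‖ ^ 2)⁻¹) • f' ‖x‖) +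
        ⟪v, v⟫_ℝ • ‖x‖⁻¹ • f' ‖x‖ := DFunLike.congr_fun (DFunLike.congr_fun hsecond.fderiv v) v
    _ = _ := by
      rw [real_inner_self_eq_norm_sq]
      match_scalars <;> field_simp
      ring

theorem laplacian_comp_norm [FiniteDimensional ℝ E] {f f' : ℝ → F} {f'' : F} (hx : x ≠ 0)
    (hf : ∀ᶠ r in 𝓝 ‖x‖, HasDerivAt f (f' r) r) (hf' : HasDerivAt f' f'' ‖x‖) :
    Δ (fun y : E ↦ f ‖y‖) x = f'' + ((Module.finrank ℝ E - 1) / ‖x‖) • f' ‖x‖ := by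
  have hnorm : ‖x‖ ≠ 0 := norm_ne_zero_iff.mpr hx
  simp only [laplacian_eq_iteratedFDeriv_stdOrthonormalBasis,
    iteratedFDeriv_two_comp_norm_apply hx hf hf', Finset.sum_add_distrib, ← Finset.sum_smul,
    Finset.sum_sub_distrib, ← Finset.sum_div, OrthonormalBasis.sum_sq_inner_left,
    OrthonormalBasis.norm_eq_one, one_pow, Finset.sum_const, Finset.card_univ, Fintype.card_fin,
    nsmul_eq_mul, mul_one]
  rw [div_self (pow_ne_zero 2 hnorm), one_smul]
  congr 2
  field_simp

theorem laplacian_norm_inv_smul_comp_norm [FiniteDimensional ℝ E] {u u' : ℝ → F} {u'' : F}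
    (hE : Module.finrank ℝ E = 3) (hx : x ≠ 0)
    (hu : ∀ᶠ r in 𝓝 ‖x‖, HasDerivAt u (u' r) r) (hu' : HasDerivAt u' u'' ‖x‖) :
    Δ (fun y : E ↦ ‖y‖⁻¹ • u ‖y‖) x = ‖x‖⁻¹ • u'' := by
  have hnorm : ‖x‖ ≠ 0 := norm_ne_zero_iff.mpr hx
  have hfirst : ∀ᶠ r in 𝓝 ‖x‖,
      HasDerivAt (fun r ↦ r⁻¹ • u r) (r⁻¹ • u' r + (-(r ^ 2)⁻¹) • u r) r := by
    filter_upwards [isOpen_ne.mem_nhds hnorm, hu] with r hr hur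
    exact (hasDerivAt_inv hr).smul hur
  have hsecond : HasDerivAt (fun r ↦ r⁻¹ • u' r + (-(r ^ 2)⁻¹) • u r)
      (‖x‖⁻¹ • u'' - (2 / ‖x‖ ^ 2) • u' ‖x‖ + (2 / ‖x‖ ^ 3) • u ‖x‖) ‖x‖ := by
    refine (((hasDerivAt_inv hnorm).smul hu').add
      (((hasDerivAt_pow 2 ‖x‖).inv (pow_ne_zero 2 hnorm)).neg.smul hu.self_of_nhds)).congr_deriv ?_
    simp only [Pi.neg_apply, Pi.inv_apply, Nat.cast_ofNat, Nat.add_one_sub_one, pow_one]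
    match_scalars <;> field_simp
    norm_num
  rw [laplacian_comp_norm hx hfirst hsecond, hE]
  match_scalars <;> field_simp <;> ring

end RadialFunctions

section Yukawa

/-- The Yukawa potential `e^{-k|x|} / (4π|x|)`: in dimension three and for `0 ≤ k`, the Green
function of `-Δ + k²` with pole at the origin. Its value at the origin is the junk value `0`. -/
noncomputable def yukawa {E : Type*} [NormedAddCommGroup E] (k : ℝ) (x : E) : ℝ :=
  Real.exp (-k * ‖x‖) / (4 * π * ‖x‖)

theorem tendsto_yukawa_sub_singularPart {E : Type*} [NormedAddCommGroup E] (k : ℝ) :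
    Tendsto (fun x : E ↦ yukawa k x - 1 / (4 * π * ‖x‖)) (𝓝[≠] 0) (𝓝 (-k / (4 * π))) := by
  have hexp : HasDerivAt (fun r : ℝ ↦ Real.exp (-k * r)) (-k) 0 := by
    simpa using ((hasDerivAt_id (0 : ℝ)).const_mul (-k)).exp
  have hnorm : Tendsto (fun x : E ↦ ‖x‖) (𝓝[≠] 0) (𝓝[≠] 0) :=
    tendsto_norm_nhdsNE_zero.mono_right (nhdsGT_le_nhdsNE 0)
  have hslope := ((hasDerivAt_iff_tendsto_slope_zero.mp hexp).comp hnorm).div_const (4 * π)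
  refine hslope.congr fun x ↦ ?_
  simp only [Function.comp_apply, yukawa, zero_add, mul_zero, Real.exp_zero, smul_eq_mul]
  ring

theorem tendsto_yukawa_smul_add_sub_singularPart {E F : Type*} [NormedAddCommGroup E]
    [NormedAddCommGroup F] [NormedSpace ℝ F] (k l : ℝ) (p q : F) :
    Tendsto (fun x : E ↦ yukawa k x • p + yukawa l x • q - (1 / (4 * π * ‖x‖)) • (p + q))
      (𝓝[≠] 0) (𝓝 (-(4 * π)⁻¹ • (k • p + l • q))) := by
  have h := ((tendsto_yukawa_sub_singularPart (E := E) k).smul_const p).add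
    ((tendsto_yukawa_sub_singularPart l).smul_const q)
  convert h using 2
  · module
  · module

variable {E F : Type*} [NormedAddCommGroup E] [InnerProductSpace ℝ E]
  [NormedAddCommGroup F] [NormedSpace ℝ F] {x : E}

theorem contDiffAt_yukawa {n : WithTop ℕ∞} (k : ℝ) (hx : x ≠ 0) : ContDiffAt ℝ n (yukawa k) x := by
  have hnorm : ContDiffAt ℝ n (fun y : E ↦ ‖y‖) x := contDiffAt_norm ℝ hx
  exact (contDiffAt_const.mul hnorm).exp.div (contDiffAt_const.mul hnorm) (by positivity)

variable [FiniteDimensional ℝ E]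

theorem laplacian_yukawa (hE : Module.finrank ℝ E = 3) (k : ℝ) (hx : x ≠ 0) :
    Δ (yukawa k : E → ℝ) x = k ^ 2 * yukawa k x := by
  have hexp (c r : ℝ) :
      HasDerivAt (fun r ↦ c * Real.exp (-k * r)) (-k * c * Real.exp (-k * r)) r := by
    refine (((hasDerivAt_id r).const_mul (-k)).exp.const_mul c).congr_deriv ?_
    simp only [id]
    ring
  have hyukawa : (yukawa k : E → ℝ) = fun y ↦ ‖y‖⁻¹ • ((4 * π)⁻¹ * Real.exp (-k * ‖y‖)) := by
    ext y
    simp only [yukawa, smul_eq_mul]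
    ring
  rw [hyukawa, laplacian_norm_inv_smul_comp_norm hE hx (.of_forall (hexp _)) (hexp _ _)]
  simp only [smul_eq_mul]
  ring

theorem laplacian_yukawa_smul_add (hE : Module.finrank ℝ E = 3) (k l : ℝ) (p q : F) (hx : x ≠ 0) :
    Δ (fun y : E ↦ yukawa k y • p + yukawa l y • q) x =
      (k ^ 2 * yukawa k x) • p + (l ^ 2 * yukawa l x) • q := by
  have hcont (k : ℝ) (p : F) : ContDiffAt ℝ 2 (fun y : E ↦ yukawa k y • p) x :=
    (contDiffAt_yukawa k hx).smul contDiffAt_const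
  have hlap (k : ℝ) (p : F) : Δ (fun y : E ↦ yukawa k y • p) x = (k ^ 2 * yukawa k x) • p := by
    rw [← laplacian_yukawa hE k hx]
    exact (contDiffAt_yukawa k hx).laplacian_CLM_comp_left
      (l := ContinuousLinearMap.toSpanSingleton ℝ p)
  rw [← hlap, ← hlap]
  exact (hcont k p).laplacian_add (hcont l q)

end Yukawa

section Eigenfunction

variable {ω ξ : ℝ} {x : EuclideanSpace ℝ (Fin 3)}

theorem lap3_eq_laplacian {F : Type*} [NormedAddCommGroup F] [NormedSpace ℝ F]
    (f : EuclideanSpace ℝ (Fin 3) → F) : lap3 f = Δ f := by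
  ext x
  simp [lap3, laplacian_eq_iteratedFDeriv_orthonormalBasis f (EuclideanSpace.basisFun (Fin 3) ℝ)]

theorem psi1_eq_yukawa (ω ξ b : ℝ) :
    Psi1 ω ξ b = fun x ↦ yukawa √(ω - ξ) x • (1 : ℂ) + yukawa √(ω + ξ) x • (b : ℂ) := by
  ext x
  simp only [Psi1, yukawa, Complex.real_smul]
  push_cast
  ring

theorem psi2_eq_yukawa (ω ξ b : ℝ) :
    Psi2 ω ξ b =
      fun x ↦ yukawa √(ω - ξ) x • Complex.I + yukawa √(ω + ξ) x • (-(b * Complex.I)) := by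
  ext x
  simp only [Psi2, yukawa, Complex.real_smul]
  push_cast
  ring

theorem lap3_yukawa_sqrt_smul_add (hξ : |ξ| ≤ ω) (p q : ℂ) (hx : x ≠ 0) :
    lap3 (fun y ↦ yukawa √(ω - ξ) y • p + yukawa √(ω + ξ) y • q) x =
      ((ω - ξ) * yukawa √(ω - ξ) x) • p + ((ω + ξ) * yukawa √(ω + ξ) x) • q := by
  obtain ⟨hneg, hpos⟩ := abs_le.mp hξ
  rw [lap3_eq_laplacian, laplacian_yukawa_smul_add finrank_euclideanSpace_fin _ _ _ _ hx,
    Real.sq_sqrt (by linarith), Real.sq_sqrt (by linarith)]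

theorem neg_lap3_psi1_add_mul_psi1 (hξ : |ξ| ≤ ω) (b : ℝ) (hx : x ≠ 0) :
    -lap3 (Psi1 ω ξ b) x + ω * Psi1 ω ξ b x = -Complex.I * ξ * Psi2 ω ξ b x := by
  rw [psi1_eq_yukawa, psi2_eq_yukawa, lap3_yukawa_sqrt_smul_add hξ _ _ hx]
  simp only [Complex.real_smul]
  push_cast
  linear_combination
    (ξ * (yukawa √(ω - ξ) x - b * yukawa √(ω + ξ) x) : ℂ) * Complex.I_sq

theorem neg_lap3_psi2_add_mul_psi2 (hξ : |ξ| ≤ ω) (b : ℝ) (hx : x ≠ 0) :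
    -lap3 (Psi2 ω ξ b) x + ω * Psi2 ω ξ b x = Complex.I * ξ * Psi1 ω ξ b x := by
  rw [psi1_eq_yukawa, psi2_eq_yukawa, lap3_yukawa_sqrt_smul_add hξ _ _ hx]
  simp only [Complex.real_smul]
  push_cast
  ring

theorem tendsto_psi1_sub_singularPart (ω ξ b : ℝ) :
    Tendsto (fun x ↦ Psi1 ω ξ b x - (((1 + b) / (4 * π * ‖x‖) : ℝ) : ℂ)) (𝓝[≠] 0)
      (𝓝 ((-(√(ω - ξ) + √(ω + ξ) * b) / (4 * π) : ℝ) : ℂ)) := by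
  rw [psi1_eq_yukawa]
  convert tendsto_yukawa_smul_add_sub_singularPart √(ω - ξ) √(ω + ξ) (1 : ℂ) b using 2 <;>
  · simp only [Complex.real_smul]
    push_cast
    ring

theorem tendsto_psi2_sub_singularPart (ω ξ b : ℝ) :
    Tendsto (fun x ↦ Psi2 ω ξ b x - Complex.I * (((1 - b) / (4 * π * ‖x‖) : ℝ) : ℂ)) (𝓝[≠] 0)
      (𝓝 (Complex.I * ((-(√(ω - ξ) - √(ω + ξ) * b) / (4 * π) : ℝ) : ℂ))) := by
  rw [psi2_eq_yukawa]
  convert tendsto_yukawa_smul_add_sub_singularPart √(ω - ξ) √(ω + ξ) Complex.I (-(b * Complex.I))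
    using 2 <;>
  · simp only [Complex.real_smul]
    push_cast
    ring

end Eigenfunction

section Parameters

variable {σ s ω ξ b : ℝ}

theorem sqrt_one_sub_sq_lt_self (hσ : 1 / √2 < σ) : √(1 - σ ^ 2) < σ := by
  have hσ0 : 0 < σ := lt_trans (by positivity) hσ
  have hsq : (1 / √2) ^ 2 < σ ^ 2 := by gcongr
  rw [div_pow, Real.sq_sqrt zero_le_two] at hsq
  rw [Real.sqrt_lt' hσ0]
  linarith

theorem two_mul_mul_lt_one (hs : σ ^ 2 + s ^ 2 = 1) (hne : s ≠ σ) : 2 * σ * s < 1 := by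
  have := sq_pos_of_ne_zero (sub_ne_zero.mpr hne)
  linarith

theorem sqrt_sub_two_mul_mul (hs : σ ^ 2 + s ^ 2 = 1) (hle : s ≤ σ) (ω : ℝ) :
    √(ω - 2 * σ * s * ω) = √ω * (σ - s) := by
  rw [show ω - 2 * σ * s * ω = ω * (σ - s) ^ 2 by linear_combination -ω * hs,
    Real.sqrt_mul' _ (sq_nonneg _), Real.sqrt_sq (sub_nonneg.mpr hle)]

theorem sqrt_add_two_mul_mul (hs : σ ^ 2 + s ^ 2 = 1) (hle : -s ≤ σ) (ω : ℝ) :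
    √(ω + 2 * σ * s * ω) = √ω * (σ + s) := by
  simpa using sqrt_sub_two_mul_mul (s := -s) (by simpa using hs) hle ω

theorem sqrt_sub_add_sqrt_add_mul (hs : σ ^ 2 + s ^ 2 = 1) (hσ : σ ≠ 0) (hle : |s| ≤ σ)
    (hξ : ξ = 2 * σ * s * ω) (hb : b = -(s + 1) / σ) :
    √(ω - ξ) + √(ω + ξ) * b = (2 * σ + 1) * √ω * (1 + b) := by
  rw [hξ, sqrt_sub_two_mul_mul hs (abs_le.mp hle).2,
    sqrt_add_two_mul_mul hs (neg_le.mp (abs_le.mp hle).1), hb]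
  field_simp
  linear_combination -√ω * hs

theorem sqrt_sub_sub_sqrt_add_mul (hs : σ ^ 2 + s ^ 2 = 1) (hσ : σ ≠ 0) (hle : |s| ≤ σ)
    (hξ : ξ = 2 * σ * s * ω) (hb : b = -(s + 1) / σ) :
    √(ω - ξ) - √(ω + ξ) * b = √ω * (1 - b) := by
  rw [hξ, sqrt_sub_two_mul_mul hs (abs_le.mp hle).2,
    sqrt_add_two_mul_mul hs (neg_le.mp (abs_le.mp hle).1), hb]
  field_simp
  linear_combination √ω * hs

end Parameters

/-- Explicit verification that `Ψ = (Ψ₁, Ψ₂)` is an eigenfunction of the linearization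
at the eigenvalue `iξ`, `ξ = 2σ√(1-σ²)ω`, with `b = -(√(1-σ²)+1)/σ`:
(i) `0 < ξ < ω`; (ii) the eigenvalue system holds away from the origin;
(iii) the δ-interaction boundary conditions hold at the origin. -/
theorem stmt_6 (σ ω ξ b : ℝ) (hσ1 : 1 / Real.sqrt 2 < σ) (hσ2 : σ < 1) (hω : 0 < ω)
    (hξ : ξ = 2 * σ * Real.sqrt (1 - σ ^ 2) * ω)
    (hb : b = -(Real.sqrt (1 - σ ^ 2) + 1) / σ) :
    (0 < ξ ∧ ξ < ω) ∧
    (∀ x : EuclideanSpace ℝ (Fin 3), x ≠ 0 →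
      -lap3 (Psi1 ω ξ b) x + (ω : ℂ) * Psi1 ω ξ b x = -(Complex.I) * (ξ : ℂ) * Psi2 ω ξ b x ∧
      -lap3 (Psi2 ω ξ b) x + (ω : ℂ) * Psi2 ω ξ b x = Complex.I * (ξ : ℂ) * Psi1 ω ξ b x) ∧
    Tendsto (fun x : EuclideanSpace ℝ (Fin 3) =>
        Psi1 ω ξ b x - (((1 + b) / (4 * Real.pi * ‖x‖) : ℝ) : ℂ))
      (nhdsWithin 0 {x | x ≠ 0})
      (nhds ((-(2 * σ + 1) * (Real.sqrt ω / (4 * Real.pi)) * (1 + b) : ℝ) : ℂ)) ∧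
    Tendsto (fun x : EuclideanSpace ℝ (Fin 3) =>
        Psi2 ω ξ b x - Complex.I * (((1 - b) / (4 * Real.pi * ‖x‖) : ℝ) : ℂ))
      (nhdsWithin 0 {x | x ≠ 0})
      (nhds (-((Real.sqrt ω / (4 * Real.pi) : ℝ) : ℂ) * Complex.I * ((1 - b : ℝ) : ℂ))) := by
  have hσ0 : 0 < σ := lt_trans (by positivity) hσ1
  have hpos : 0 < 1 - σ ^ 2 := by nlinarith
  have hlt : √(1 - σ ^ 2) < σ := sqrt_one_sub_sq_lt_self hσ1
  have hle : |√(1 - σ ^ 2)| ≤ σ := by rw [abs_of_nonneg (Real.sqrt_nonneg _)]; exact hlt.le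
  have hs : σ ^ 2 + √(1 - σ ^ 2) ^ 2 = 1 := by rw [Real.sq_sqrt hpos.le]; ring
  have hξ0 : 0 < ξ := by rw [hξ]; have := Real.sqrt_pos.mpr hpos; positivity
  have hξω : ξ < ω := by rw [hξ]; exact mul_lt_of_lt_one_left hω (two_mul_mul_lt_one hs hlt.ne)
  have habs : |ξ| ≤ ω := by rw [abs_of_pos hξ0]; exact hξω.le
  refine ⟨⟨hξ0, hξω⟩,
    fun x hx ↦ ⟨neg_lap3_psi1_add_mul_psi1 habs b hx, neg_lap3_psi2_add_mul_psi2 habs b hx⟩, ?_, ?_⟩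
  · convert! tendsto_psi1_sub_singularPart ω ξ b using 3
    rw [sqrt_sub_add_sqrt_add_mul hs hσ0.ne' hle hξ hb]
    ring
  · convert! tendsto_psi2_sub_singularPart ω ξ b using 2
    rw [sqrt_sub_sub_sqrt_add_mul hs hσ0.ne' hle hξ hb]
    push_cast
    ring
end

section
/- Let C₀ > 0 and ε ∈ (0,1], and let q : [0,∞) → ℂ be measurable with |q(s)| ≤ C₀ ε/(1+εs) for all s ≥ 0. Then there exists C' > 0, depending only on C₀, such that for every t ≥ 0: ∫₀^∞ u^{−3/2} |q(t + 1/u)|² du ≤ C' / √(1+εt). -/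
open Set MeasureTheory

/-! The majorants `C₀ κ / (1 + κ s)` form a family stable under time translation: moving the
origin to `t` replaces the parameter `κ = ε` by `κ = ε / (1 + ε t)`. It therefore suffices to
treat `t = 0`, where the weighted square of the majorant at `s = 1 / u` is `C₀² κ² √u / (u + κ)²`.
This function has an elementary antiderivative, and its integral gives the bound
`(π / 2) C₀² κ ^ (3 / 2)`, which is attained by the majorant itself. Finally
`κ ≤ 1 / (1 + ε t) ≤ 1` when `ε ≤ 1`, so that `κ ^ (3 / 2) ≤ √κ ≤ 1 / √(1 + ε t)`. -/

section SqrtIntegral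

open Filter Topology

variable {κ : ℝ}

/-- The antiderivative of `√x / (x + κ) ^ 2` on `(0, ∞)`, normalised to vanish at `0`. -/
noncomputable def sqrtDivAddSqPrimitive (κ x : ℝ) : ℝ :=
  Real.arctan (√x / √κ) / √κ - √x / (x + κ)

theorem hasDerivAt_sqrt_div_add {u : ℝ} (hu : 0 < u) (hκ : 0 < κ) :
    HasDerivAt (fun x ↦ √x / (x + κ)) (1 / (2 * √u * (u + κ)) - √u / (u + κ) ^ 2) u := by
  have hsqrt : √u ≠ 0 := (Real.sqrt_pos.2 hu).ne'
  have hadd : u + κ ≠ 0 := (add_pos hu hκ).ne'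
  refine ((Real.hasDerivAt_sqrt hu.ne').div ((hasDerivAt_id u).add_const κ) hadd).congr_deriv ?_
  simp only [id_eq]
  field_simp

theorem hasDerivAt_arctan_sqrt_div {u : ℝ} (hu : 0 < u) (hκ : 0 < κ) :
    HasDerivAt (fun x ↦ Real.arctan (√x / √κ) / √κ) (1 / (2 * √u * (u + κ))) u := by
  refine (((Real.hasDerivAt_sqrt hu.ne').div_const √κ).arctan.div_const √κ).congr_deriv ?_
  rw [div_pow, Real.sq_sqrt hu.le, Real.sq_sqrt hκ.le]
  field_simp
  rw [Real.sq_sqrt hκ.le]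
  ring

theorem hasDerivAt_sqrtDivAddSqPrimitive {u : ℝ} (hu : 0 < u) (hκ : 0 < κ) :
    HasDerivAt (sqrtDivAddSqPrimitive κ) (√u / (u + κ) ^ 2) u :=
  ((hasDerivAt_arctan_sqrt_div hu hκ).sub (hasDerivAt_sqrt_div_add hu hκ)).congr_deriv
    (sub_sub_cancel _ _)

theorem continuousWithinAt_sqrtDivAddSqPrimitive (hκ : 0 < κ) :
    ContinuousWithinAt (sqrtDivAddSqPrimitive κ) (Ici 0) 0 := by
  have hadd : (0 : ℝ) + κ ≠ 0 := by simpa only [zero_add] using hκ.ne'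
  unfold sqrtDivAddSqPrimitive
  exact ContinuousAt.continuousWithinAt (by fun_prop (disch := assumption))

theorem tendsto_sqrt_div_add_atTop (hκ : 0 ≤ κ) :
    Tendsto (fun x ↦ √x / (x + κ)) atTop (𝓝 0) := by
  refine squeeze_zero' ?_ ?_ Real.tendsto_sqrt_atTop.inv_tendsto_atTop
  · filter_upwards [eventually_ge_atTop 0] with x hx
    positivity
  · filter_upwards [eventually_gt_atTop 0] with x hx
    calc √x / (x + κ) ≤ √x / x := by gcongr; exact le_add_of_nonneg_right hκ
      _ = (√x)⁻¹ := Real.sqrt_div_self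

theorem tendsto_sqrtDivAddSqPrimitive_atTop (hκ : 0 < κ) :
    Tendsto (sqrtDivAddSqPrimitive κ) atTop (𝓝 (Real.pi / (2 * √κ))) := by
  have harctan : Tendsto (fun x ↦ Real.arctan (√x / √κ)) atTop (𝓝 (Real.pi / 2)) :=
    (Real.tendsto_arctan_atTop.mono_right nhdsWithin_le_nhds).comp
      (Real.tendsto_sqrt_atTop.atTop_div_const (Real.sqrt_pos.2 hκ))
  unfold sqrtDivAddSqPrimitive
  simpa only [sub_zero, div_div] using
    (harctan.div_const √κ).sub (tendsto_sqrt_div_add_atTop hκ.le)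

theorem integrableOn_Ioi_sqrt_div_add_sq (hκ : 0 < κ) :
    IntegrableOn (fun u ↦ √u / (u + κ) ^ 2) (Ioi 0) :=
  integrableOn_Ioi_deriv_of_nonneg (continuousWithinAt_sqrtDivAddSqPrimitive hκ)
    (fun _ hu ↦ hasDerivAt_sqrtDivAddSqPrimitive hu hκ) (fun _ _ ↦ by positivity)
    (tendsto_sqrtDivAddSqPrimitive_atTop hκ)

theorem integral_Ioi_sqrt_div_add_sq (hκ : 0 < κ) :
    ∫ u in Ioi 0, √u / (u + κ) ^ 2 = Real.pi / (2 * √κ) := by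
  rw [integral_Ioi_of_hasDerivAt_of_nonneg
    (continuousWithinAt_sqrtDivAddSqPrimitive hκ)
    (fun _ hu ↦ hasDerivAt_sqrtDivAddSqPrimitive hu hκ) (fun _ _ ↦ by positivity)
    (tendsto_sqrtDivAddSqPrimitive_atTop hκ)]
  simp only [sqrtDivAddSqPrimitive, Real.sqrt_zero, zero_div, Real.arctan_zero, sub_zero]

end SqrtIntegral

section Majorant

variable {C ε κ t : ℝ}

/-- The profile `C κ / (1 + κ s)` that dominates the dispersive charge at time `s`, with amplitude
and decay rate both proportional to `κ`. -/
noncomputable def decayMajorant (C κ s : ℝ) : ℝ :=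
  C * κ / (1 + κ * s)

theorem decayMajorant_add (hεt : 1 + ε * t ≠ 0) (s : ℝ) :
    decayMajorant C ε (t + s) = decayMajorant C (ε / (1 + ε * t)) s := by
  have hfactor : 1 + ε * (t + s) = (1 + ε * t) * (1 + ε / (1 + ε * t) * s) := by
    field_simp
    ring
  rw [decayMajorant, decayMajorant, hfactor, ← div_div, mul_div_assoc]

theorem rpow_mul_decayMajorant_one_div_sq {u : ℝ} (hu : 0 < u) (hκ : 0 ≤ κ) :
    u ^ (-(3 : ℝ) / 2) * decayMajorant C κ (1 / u) ^ 2 =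
      (C * κ) ^ 2 * (√u / (u + κ) ^ 2) := by
  have hrpow : u ^ (-(3 : ℝ) / 2) * u ^ 2 = √u := by
    rw [← Real.rpow_natCast u 2, ← Real.rpow_add hu, Real.sqrt_eq_rpow]
    norm_num
  have hmajorant : C * κ / (1 + κ * (1 / u)) = C * κ * u / (u + κ) := by
    field_simp
  rw [decayMajorant, hmajorant, ← hrpow, div_pow]
  ring

theorem sq_mul_pi_div_two_mul_sqrt (hκ : 0 < κ) :
    (C * κ) ^ 2 * (Real.pi / (2 * √κ)) = Real.pi / 2 * C ^ 2 * κ ^ ((3 : ℝ) / 2) := by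
  have hrpow : κ ^ ((3 : ℝ) / 2) = κ ^ 2 / √κ := by
    rw [Real.sqrt_eq_rpow, ← Real.rpow_natCast κ 2, ← Real.rpow_sub hκ]
    norm_num
  rw [hrpow]
  ring

theorem div_one_add_mul_rpow_le_one_div_sqrt (hε : 0 ≤ ε) (hε1 : ε ≤ 1) (ht : 0 ≤ t) :
    (ε / (1 + ε * t)) ^ ((3 : ℝ) / 2) ≤ 1 / √(1 + ε * t) := by
  have hA : 1 ≤ 1 + ε * t := le_add_of_nonneg_right (mul_nonneg hε ht)
  have hκ1 : ε / (1 + ε * t) ≤ 1 := div_le_one_of_le₀ (hε1.trans hA) (by positivity)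
  calc (ε / (1 + ε * t)) ^ ((3 : ℝ) / 2)
      ≤ (ε / (1 + ε * t)) ^ ((1 : ℝ) / 2) :=
        Real.rpow_le_rpow_of_exponent_ge' (by positivity) hκ1 (by norm_num) (by norm_num)
    _ = √(ε / (1 + ε * t)) := (Real.sqrt_eq_rpow _).symm
    _ ≤ √(1 / (1 + ε * t)) := by gcongr
    _ = 1 / √(1 + ε * t) := by rw [Real.sqrt_div zero_le_one, Real.sqrt_one]

end Majorant

section WeightedSquare

variable {E : Type*} [SeminormedAddCommGroup E] {C κ : ℝ} {p : ℝ → E}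

theorem rpow_mul_norm_sq_le_of_norm_le_decayMajorant (hκ : 0 ≤ κ)
    (hp : ∀ s, 0 < s → ‖p s‖ ≤ decayMajorant C κ s) {u : ℝ} (hu : 0 < u) :
    u ^ (-(3 : ℝ) / 2) * ‖p (1 / u)‖ ^ 2 ≤ (C * κ) ^ 2 * (√u / (u + κ) ^ 2) := by
  rw [← rpow_mul_decayMajorant_one_div_sq hu hκ]
  gcongr
  exact hp _ (one_div_pos.2 hu)

theorem integrableOn_rpow_mul_norm_sq_of_norm_le_decayMajorant (hκ : 0 < κ)
    (hpm : StronglyMeasurable p) (hp : ∀ s, 0 < s → ‖p s‖ ≤ decayMajorant C κ s) :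
    IntegrableOn (fun u : ℝ ↦ u ^ (-(3 : ℝ) / 2) * ‖p (1 / u)‖ ^ 2) (Ioi 0) := by
  have hmeas : Measurable fun u : ℝ ↦ u ^ (-(3 : ℝ) / 2) * ‖p (1 / u)‖ ^ 2 :=
    (measurable_id.pow_const _).mul
      ((hpm.norm.measurable.comp (measurable_const.div measurable_id)).pow_const 2)
  refine ((integrableOn_Ioi_sqrt_div_add_sq hκ).const_mul ((C * κ) ^ 2)).mono'
    hmeas.aestronglyMeasurable ?_
  filter_upwards [ae_restrict_mem measurableSet_Ioi] with u (hu : 0 < u)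
  rw [Real.norm_of_nonneg (by positivity)]
  exact rpow_mul_norm_sq_le_of_norm_le_decayMajorant hκ.le hp hu

theorem integral_rpow_mul_norm_sq_le_of_norm_le_decayMajorant (hκ : 0 < κ)
    (hpm : StronglyMeasurable p) (hp : ∀ s, 0 < s → ‖p s‖ ≤ decayMajorant C κ s) :
    ∫ u in Ioi (0 : ℝ), u ^ (-(3 : ℝ) / 2) * ‖p (1 / u)‖ ^ 2 ≤
      Real.pi / 2 * C ^ 2 * κ ^ ((3 : ℝ) / 2) :=
  calc ∫ u in Ioi (0 : ℝ), u ^ (-(3 : ℝ) / 2) * ‖p (1 / u)‖ ^ 2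
      ≤ ∫ u in Ioi (0 : ℝ), (C * κ) ^ 2 * (√u / (u + κ) ^ 2) :=
        setIntegral_mono_on (integrableOn_rpow_mul_norm_sq_of_norm_le_decayMajorant hκ hpm hp)
          ((integrableOn_Ioi_sqrt_div_add_sq hκ).const_mul _) measurableSet_Ioi
          fun _ hu ↦ rpow_mul_norm_sq_le_of_norm_le_decayMajorant hκ.le hp hu
    _ = (C * κ) ^ 2 * (Real.pi / (2 * √κ)) := by
        rw [integral_const_mul, integral_Ioi_sqrt_div_add_sq hκ]
    _ = Real.pi / 2 * C ^ 2 * κ ^ ((3 : ℝ) / 2) := sq_mul_pi_div_two_mul_sqrt hκ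

theorem stmt_9_general {C₀ ε t : ℝ} {q : ℝ → E} (hε : 0 < ε) (ht : 0 ≤ t)
    (hq : StronglyMeasurable q) (hb : ∀ s, 0 ≤ s → ‖q s‖ ≤ C₀ * ε / (1 + ε * s)) :
    IntegrableOn (fun u : ℝ ↦ u ^ (-(3 : ℝ) / 2) * ‖q (t + 1 / u)‖ ^ 2) (Ioi 0) ∧
      ∫ u in Ioi (0 : ℝ), u ^ (-(3 : ℝ) / 2) * ‖q (t + 1 / u)‖ ^ 2 ≤
        Real.pi / 2 * C₀ ^ 2 * (ε / (1 + ε * t)) ^ ((3 : ℝ) / 2) := by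
  have hA : 0 < 1 + ε * t := by positivity
  have hshift : ∀ s, 0 < s → ‖q (t + s)‖ ≤ decayMajorant C₀ (ε / (1 + ε * t)) s := fun s hs ↦
    (hb (t + s) (by positivity)).trans_eq (decayMajorant_add hA.ne' s)
  have hshift_meas : StronglyMeasurable fun s ↦ q (t + s) :=
    hq.comp_measurable (measurable_const_add t)
  exact ⟨integrableOn_rpow_mul_norm_sq_of_norm_le_decayMajorant (div_pos hε hA) hshift_meas hshift,
    integral_rpow_mul_norm_sq_le_of_norm_le_decayMajorant (div_pos hε hA) hshift_meas hshift⟩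

end WeightedSquare

/-- Quantitative estimate behind the scattering decomposition: if
`|q(s)| ≤ C₀ ε/(1+εs)`, then `∫₀^∞ u^{-3/2} |q(t+1/u)|² du ≤ C'/√(1+εt)`
with `C'` depending only on `C₀`. -/
theorem stmt_9 (C₀ : ℝ) (hC₀ : 0 < C₀) :
    ∃ C' > (0:ℝ), ∀ ε : ℝ, 0 < ε → ε ≤ 1 → ∀ q : ℝ → ℂ, Measurable q →
      (∀ s : ℝ, 0 ≤ s → ‖q s‖ ≤ C₀ * ε / (1 + ε * s)) →
      ∀ t : ℝ, 0 ≤ t →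
        (∫ u in Ioi (0:ℝ), u ^ (-(3:ℝ)/2) * ‖q (t + 1 / u)‖ ^ 2)
          ≤ C' / Real.sqrt (1 + ε * t) := by
  refine ⟨Real.pi / 2 * C₀ ^ 2, by positivity, fun ε hε hε1 q hq hb t ht ↦
    (stmt_9_general hε ht hq.stronglyMeasurable hb).2.trans ?_⟩
  exact (mul_le_mul_of_nonneg_left (div_one_add_mul_rpow_le_one_div_sqrt hε.le hε1 ht)
    (by positivity)).trans_eq (mul_one_div _ _)
end

section
/- For every ω > 0 and α > 0 there exists C > 0 such that for every a > 0 and every t ≥ 0 the improper integral I(t,a) := lim_{R→∞} ∫_t^R exp( i( ωτ − a²/(4τ) ) ) · τ^{3/2}/(a² + 4ατ²) dτ exists, and one has |I(0,a)| ≤ C·a^{−1/2}, and |I(t,a)| ≤ C·t^{−1/2} for all t > 0. -/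
open Filter

/-!
Write the phase as `φ(τ) = ωτ - a²/(4τ)` and the amplitude as `g(τ) = τ^β/(a² + 4ατ²)`. Since
`φ' = ω + a²/(4τ²)` never vanishes, `e^{iφ} g = -i (e^{iφ})' q` with
`q = g/φ' = 4τ^{β+2}/((a² + 4ατ²)(a² + 4ωτ²))`, and integration by parts bounds the integral by the
boundary values of `q` and its total variation. As `|q'| ≤ (|β| + 2) q/τ`, it is enough to dominate
`q` by powers of `τ`: discarding `a²` in the denominator gives `q ≤ τ^{β-2}/(4αω)`, which decays and
controls the tail, and keeping only `a²` gives `q ≤ 4τ^{β+2}/a⁴`, which controls the part `τ ≤ a`.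
-/

namespace ScatteringIntegral

open MeasureTheory Set Topology

section IntegrationByParts

variable {𝕜 E : Type*} [NontriviallyNormedField 𝕜] [NormedAlgebra ℝ 𝕜]
  [NormedAddCommGroup E] [NormedSpace 𝕜 E] [NormedSpace ℝ E] [CompleteSpace E]
  {u u' : ℝ → 𝕜} {v v' : ℝ → E} {s R : ℝ}

lemma norm_integral_deriv_smul_le (hsR : s ≤ R)
    (hu : ∀ x ∈ Icc s R, HasDerivAt u (u' x) x) (hv : ∀ x ∈ Icc s R, HasDerivAt v (v' x) x)
    (hu' : IntervalIntegrable u' volume s R) (hv' : IntervalIntegrable v' volume s R)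
    (hu_le : ∀ x ∈ Icc s R, ‖u x‖ ≤ 1) :
    ‖∫ x in s..R, u' x • v x‖ ≤ ‖v s‖ + ‖v R‖ + ∫ x in s..R, ‖v' x‖ := by
  have norm_smul_le_right {x : ℝ} (hx : x ∈ Icc s R) (w : E) : ‖u x • w‖ ≤ ‖w‖ := by
    rw [norm_smul]
    exact mul_le_of_le_one_left (norm_nonneg w) (hu_le x hx)
  have remainder_le : ‖∫ x in s..R, u x • v' x‖ ≤ ∫ x in s..R, ‖v' x‖ :=
    intervalIntegral.norm_integral_le_of_norm_le hsR
      (Eventually.of_forall fun x hx => norm_smul_le_right (Ioc_subset_Icc_self hx) _) hv'.norm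
  rw [← uIcc_of_le hsR] at hu hv
  have by_parts : ∫ x in s..R, u' x • v x
      = u R • v R - u s • v s - ∫ x in s..R, u x • v' x := by
    rw [intervalIntegral.integral_smul_deriv_eq_deriv_smul hu hv hu' hv', sub_sub_cancel]
  calc ‖∫ x in s..R, u' x • v x‖
      ≤ ‖u R • v R‖ + ‖u s • v s‖ + ‖∫ x in s..R, u x • v' x‖ := by
        rw [by_parts]
        exact (norm_sub_le _ _).trans (by gcongr; exact norm_sub_le _ _)
    _ ≤ ‖v R‖ + ‖v s‖ + ∫ x in s..R, ‖v' x‖ := by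
        gcongr
        exacts [norm_smul_le_right (right_mem_Icc.2 hsR) _,
          norm_smul_le_right (left_mem_Icc.2 hsR) _]
    _ = ‖v s‖ + ‖v R‖ + ∫ x in s..R, ‖v' x‖ := by ring

lemma integral_rpow_sub_one_le {p : ℝ} (hs : 0 < s) (hsR : s ≤ R) (hp : p ≠ 0) :
    ∫ x in s..R, x ^ (p - 1) ≤ max (s ^ p) (R ^ p) / |p| := by
  have hR : 0 < R := hs.trans_le hsR
  have zero_notMem : (0 : ℝ) ∉ uIcc s R := notMem_uIcc_of_lt hs hR
  rw [integral_rpow (Or.inr ⟨by simpa [sub_eq_iff_eq_add] using hp, zero_notMem⟩), sub_add_cancel]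
  calc (R ^ p - s ^ p) / p ≤ |R ^ p - s ^ p| / |p| := by
        rw [← abs_div]
        exact le_abs_self _
    _ ≤ max (s ^ p) (R ^ p) / |p| := by
        gcongr
        rw [← max_sub_min_eq_abs]
        exact sub_le_self _ (by positivity)

lemma norm_integral_deriv_smul_le_of_le_rpow {p A B : ℝ} (hs : 0 < s) (hsR : s ≤ R) (hp : p ≠ 0)
    (hu : ∀ x ∈ Icc s R, HasDerivAt u (u' x) x) (hv : ∀ x ∈ Icc s R, HasDerivAt v (v' x) x)
    (hu' : IntervalIntegrable u' volume s R) (hv' : IntervalIntegrable v' volume s R)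
    (hu_le : ∀ x ∈ Icc s R, ‖u x‖ ≤ 1) (hv_le : ∀ x ∈ Icc s R, ‖v x‖ ≤ A * x ^ p)
    (hv'_le : ∀ x ∈ Icc s R, ‖v' x‖ ≤ B * x ^ (p - 1)) :
    ‖∫ x in s..R, u' x • v x‖ ≤ (2 * A + B / |p|) * max (s ^ p) (R ^ p) := by
  have hs_mem : s ∈ Icc s R := left_mem_Icc.2 hsR
  have hA : 0 ≤ A :=
    nonneg_of_mul_nonneg_left ((norm_nonneg _).trans (hv_le s hs_mem)) (by positivity)
  have hB : 0 ≤ B :=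
    nonneg_of_mul_nonneg_left ((norm_nonneg _).trans (hv'_le s hs_mem)) (by positivity)
  have rpow_integrable : IntervalIntegrable (fun x => B * x ^ (p - 1)) volume s R :=
    (intervalIntegral.intervalIntegrable_rpow
      (Or.inr (notMem_uIcc_of_lt hs (hs.trans_le hsR)))).const_mul B
  have variation_le : ∫ x in s..R, ‖v' x‖ ≤ B / |p| * max (s ^ p) (R ^ p) :=
    calc ∫ x in s..R, ‖v' x‖ ≤ ∫ x in s..R, B * x ^ (p - 1) :=
          intervalIntegral.integral_mono_on hsR hv'.norm rpow_integrable hv'_le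
      _ = B * ∫ x in s..R, x ^ (p - 1) := intervalIntegral.integral_const_mul _ _
      _ ≤ B * (max (s ^ p) (R ^ p) / |p|) := by
          gcongr
          exact integral_rpow_sub_one_le hs hsR hp
      _ = B / |p| * max (s ^ p) (R ^ p) := by ring
  calc ‖∫ x in s..R, u' x • v x‖ ≤ ‖v s‖ + ‖v R‖ + ∫ x in s..R, ‖v' x‖ :=
        norm_integral_deriv_smul_le hsR hu hv hu' hv' hu_le
    _ ≤ A * max (s ^ p) (R ^ p) + A * max (s ^ p) (R ^ p) + B / |p| * max (s ^ p) (R ^ p) := by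
        gcongr
        · exact (hv_le s hs_mem).trans (by gcongr; exact le_max_left _ _)
        · exact (hv_le R (right_mem_Icc.2 hsR)).trans (by gcongr; exact le_max_right _ _)
    _ = (2 * A + B / |p|) * max (s ^ p) (R ^ p) := by ring

end IntegrationByParts

section ImproperIntegral

variable {E : Type*} [NormedAddCommGroup E] [NormedSpace ℝ E] {f : ℝ → E}

lemma norm_integral_le_of_forall_Ioc {a b M : ℝ} (hab : a < b)
    (hf : IntervalIntegrable f volume a b) (hM : ∀ s ∈ Ioc a b, ‖∫ x in s..b, f x‖ ≤ M) :
    ‖∫ x in a..b, f x‖ ≤ M := by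
  have continuousOn_lower : ContinuousOn (fun s => ∫ x in s..b, f x) (uIcc a b) :=
    intervalIntegral.continuousOn_primitive_interval_left
      (by rwa [uIcc_of_le hab.le, ← intervalIntegrable_iff_integrableOn_Icc_of_le hab.le])
  have tendsto_lower : Tendsto (fun s => ∫ x in s..b, f x) (𝓝[>] a) (𝓝 (∫ x in a..b, f x)) :=
    (continuousOn_lower a left_mem_uIcc).mono_left <|
      nhdsWithin_le_of_mem (by rw [uIcc_of_le hab.le]; exact Icc_mem_nhdsGT hab)
  refine le_of_tendsto tendsto_lower.norm ?_
  filter_upwards [Ioc_mem_nhdsGT hab] using hM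

lemma exists_tendsto_integral_atTop [CompleteSpace E] {δ : ℝ → ℝ}
    (hf : ∀ s R, IntervalIntegrable f volume s R) (hδ : Tendsto δ atTop (𝓝 0))
    (hfδ : ∀ᶠ s in atTop, ∀ R, s ≤ R → ‖∫ x in s..R, f x‖ ≤ δ s) (t : ℝ) :
    ∃ l, Tendsto (fun R => ∫ x in t..R, f x) atTop (𝓝 l) := by
  apply cauchySeq_tendsto_of_complete
  rw [Metric.cauchySeq_iff']
  intro ε hε
  obtain ⟨s, hs, hδs⟩ := (hfδ.and (hδ.eventually_lt_const hε)).exists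
  refine ⟨s, fun R hR => ?_⟩
  rw [dist_eq_norm, intervalIntegral.integral_interval_sub_left (hf _ _) (hf _ _)]
  exact (hs R hR).trans_lt hδs

end ImproperIntegral

/-- The oscillating factor `e^{iφ(τ)}` with phase `φ(τ) = ωτ - a²/(4τ)`. -/
noncomputable def oscillation (ω a τ : ℝ) : ℂ :=
  Complex.exp (Complex.I * ((ω * τ - a ^ 2 / (4 * τ) : ℝ) : ℂ))

/-- The derivative in `τ` of the oscillating factor; its last factor is `iφ'(τ)`. -/
noncomputable def oscillationDeriv (ω a τ : ℝ) : ℂ :=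
  oscillation ω a τ * (Complex.I * ((ω + a ^ 2 / (4 * τ ^ 2) : ℝ) : ℂ))

/-- The non-oscillating factor of the integrand; the exponent `β = 3/2` is the one of the
scattering problem. -/
noncomputable def amplitude (α β a τ : ℝ) : ℝ := τ ^ β / (a ^ 2 + 4 * α * τ ^ 2)

/-- The integrand `e^{iφ(τ)} τ^β / (a² + 4ατ²)`. -/
noncomputable def integrand (ω α β a τ : ℝ) : ℂ := oscillation ω a τ * (amplitude α β a τ : ℂ)

/-- The amplitude divided by the phase derivative `φ' = ω + a²/(4τ²)`, with denominators cleared. -/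
noncomputable def reducedAmplitude (ω α β a τ : ℝ) : ℝ :=
  4 * τ ^ (β + 2) / ((a ^ 2 + 4 * α * τ ^ 2) * (a ^ 2 + 4 * ω * τ ^ 2))

/-- The derivative in `τ` of the reduced amplitude, as that amplitude times its logarithmic
derivative. -/
noncomputable def reducedAmplitudeDeriv (ω α β a τ : ℝ) : ℝ :=
  reducedAmplitude ω α β a τ / τ * (β + 2 - 8 * α * τ ^ 2 / (a ^ 2 + 4 * α * τ ^ 2)
    - 8 * ω * τ ^ 2 / (a ^ 2 + 4 * ω * τ ^ 2))

/-- The improper integral `I(t,a) = lim_{R→∞} ∫ₜ^R e^{iφ(τ)} τ^β / (a² + 4ατ²) dτ`; `limUnder` is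
meaningful here by `tendsto_improperIntegral`. -/
noncomputable def improperIntegral (ω α β t a : ℝ) : ℂ :=
  limUnder atTop fun R => ∫ τ in t..R, integrand ω α β a τ

variable {ω α β a s t R τ : ℝ}

lemma norm_oscillation : ‖oscillation ω a τ‖ = 1 := by
  rw [oscillation, mul_comm, Complex.norm_exp_ofReal_mul_I]

lemma hasDerivAt_oscillation (hτ : τ ≠ 0) :
    HasDerivAt (oscillation ω a) (oscillationDeriv ω a τ) τ := by
  have hasDerivAt_phase :
      HasDerivAt (fun x : ℝ => ω * x - a ^ 2 / (4 * x)) (ω + a ^ 2 / (4 * τ ^ 2)) τ := by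
    have h := ((hasDerivAt_id' τ).const_mul ω).sub
      ((hasDerivAt_const τ (a ^ 2)).div ((hasDerivAt_id' τ).const_mul 4) (by positivity))
    refine h.congr_deriv ?_
    field_simp
    ring
  exact (hasDerivAt_phase.ofReal_comp.const_mul Complex.I).cexp

lemma continuousOn_oscillationDeriv : ContinuousOn (oscillationDeriv ω a) (Ioi 0) := by
  intro τ hτ
  rw [mem_Ioi] at hτ
  have continuousAt_oscillation : ContinuousAt (oscillation ω a) τ :=
    (hasDerivAt_oscillation hτ.ne').continuousAt
  apply ContinuousAt.continuousWithinAt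
  unfold oscillationDeriv
  fun_prop (disch := positivity)

lemma intervalIntegrable_integrand (hα : 0 < α) (hβ : -1 < β) (ha : a ≠ 0) (s R : ℝ) :
    IntervalIntegrable (integrand ω α β a) volume s R := by
  have continuous_weight : Continuous fun τ : ℝ => (a ^ 2 + 4 * α * τ ^ 2)⁻¹ :=
    Continuous.inv₀ (by fun_prop) fun τ => by positivity
  have amplitude_integrable : IntervalIntegrable (amplitude α β a) volume s R :=
    (intervalIntegral.intervalIntegrable_rpow' hβ).mul_continuousOn continuous_weight.continuousOn
  have measurable_integrand : Measurable (integrand ω α β a) := by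
    unfold integrand oscillation amplitude
    fun_prop
  refine amplitude_integrable.mono_fun measurable_integrand.aestronglyMeasurable ?_
  exact Eventually.of_forall fun τ => by simp [integrand, norm_oscillation]

lemma reducedAmplitude_nonneg (hω : 0 < ω) (hα : 0 < α) (hτ : 0 < τ) :
    0 ≤ reducedAmplitude ω α β a τ := by
  unfold reducedAmplitude
  positivity

lemma phaseDeriv_mul_reducedAmplitude (hω : 0 < ω) (hα : 0 < α) (hτ : 0 < τ) :
    (ω + a ^ 2 / (4 * τ ^ 2)) * reducedAmplitude ω α β a τ = amplitude α β a τ := by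
  have rpow_add_two : τ ^ (β + 2) = τ ^ β * τ ^ 2 := mod_cast Real.rpow_add_natCast hτ.ne' β 2
  rw [reducedAmplitude, amplitude, rpow_add_two]
  field_simp
  ring

lemma hasDerivAt_reducedAmplitude (hω : 0 < ω) (hα : 0 < α) (hτ : 0 < τ) :
    HasDerivAt (reducedAmplitude ω α β a) (reducedAmplitudeDeriv ω α β a τ) τ := by
  have hasDerivAt_numerator :
      HasDerivAt (fun x : ℝ => 4 * x ^ (β + 2)) (4 * ((β + 2) * (τ ^ (β + 2) / τ))) τ := by
    rw [← Real.rpow_sub_one hτ.ne']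
    exact (Real.hasDerivAt_rpow_const (Or.inl hτ.ne')).const_mul 4
  have hasDerivAt_factor (c : ℝ) :
      HasDerivAt (fun x : ℝ => a ^ 2 + 4 * c * x ^ 2) (8 * c * τ) τ := by
    refine (((hasDerivAt_pow 2 τ).const_mul (4 * c)).const_add (a ^ 2)).congr_deriv ?_
    push_cast
    ring
  have h := hasDerivAt_numerator.fun_div ((hasDerivAt_factor α).fun_mul (hasDerivAt_factor ω))
    (by positivity)
  refine h.congr_deriv ?_
  unfold reducedAmplitudeDeriv reducedAmplitude
  field_simp
  ring

lemma continuousOn_reducedAmplitudeDeriv (hω : 0 < ω) (hα : 0 < α) :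
    ContinuousOn (reducedAmplitudeDeriv ω α β a) (Ioi 0) := by
  intro τ hτ
  rw [mem_Ioi] at hτ
  have continuousAt_reducedAmplitude : ContinuousAt (reducedAmplitude ω α β a) τ :=
    (hasDerivAt_reducedAmplitude hω hα hτ).continuousAt
  apply ContinuousAt.continuousWithinAt
  unfold reducedAmplitudeDeriv
  fun_prop (disch := positivity)

lemma abs_reducedAmplitudeDeriv_le (hω : 0 < ω) (hα : 0 < α) (hτ : 0 < τ) :
    |reducedAmplitudeDeriv ω α β a τ| ≤ (|β| + 2) * (reducedAmplitude ω α β a τ / τ) := by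
  have quotient_mem {c : ℝ} (hc : 0 < c) :
      8 * c * τ ^ 2 / (a ^ 2 + 4 * c * τ ^ 2) ∈ Icc 0 2 := by
    refine ⟨by positivity, ?_⟩
    rw [div_le_iff₀ (by positivity)]
    linarith [sq_nonneg a]
  obtain ⟨hα_nonneg, hα_le⟩ := quotient_mem hα
  obtain ⟨hω_nonneg, hω_le⟩ := quotient_mem hω
  have quotient_nonneg : 0 ≤ reducedAmplitude ω α β a τ / τ :=
    div_nonneg (reducedAmplitude_nonneg hω hα hτ) hτ.le
  rw [reducedAmplitudeDeriv, abs_mul, abs_of_nonneg quotient_nonneg, mul_comm]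
  refine mul_le_mul_of_nonneg_right ?_ quotient_nonneg
  rw [abs_le]
  constructor <;> linarith [le_abs_self β, neg_abs_le β]

lemma rpow_add_two_eq_rpow_sub_two_mul {x : ℝ} (hx : x ≠ 0) :
    x ^ (β + 2) = x ^ (β - 2) * x ^ 4 := by
  rw [← Real.rpow_add_natCast hx]
  congr 1
  push_cast
  ring

lemma reducedAmplitude_le_rpow_sub_two (hω : 0 < ω) (hα : 0 < α) (hτ : 0 < τ) :
    reducedAmplitude ω α β a τ ≤ 1 / (4 * α * ω) * τ ^ (β - 2) := by
  calc reducedAmplitude ω α β a τ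
      ≤ 4 * τ ^ (β + 2) / ((4 * α * τ ^ 2) * (4 * ω * τ ^ 2)) := by
        unfold reducedAmplitude
        gcongr <;> exact le_add_of_nonneg_left (sq_nonneg a)
    _ = 1 / (4 * α * ω) * τ ^ (β - 2) := by
        rw [rpow_add_two_eq_rpow_sub_two_mul hτ.ne']
        field_simp

lemma reducedAmplitude_le_rpow_add_two (hω : 0 < ω) (hα : 0 < α) (ha : a ≠ 0) (hτ : 0 < τ) :
    reducedAmplitude ω α β a τ ≤ 4 / a ^ 4 * τ ^ (β + 2) :=
  calc reducedAmplitude ω α β a τ ≤ 4 * τ ^ (β + 2) / (a ^ 2 * a ^ 2) := by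
        unfold reducedAmplitude
        gcongr <;> exact le_add_of_nonneg_right (by positivity)
    _ = 4 / a ^ 4 * τ ^ (β + 2) := by ring

lemma oscillationDeriv_mul_reducedAmplitude (hω : 0 < ω) (hα : 0 < α) (hτ : 0 < τ) :
    oscillationDeriv ω a τ * (reducedAmplitude ω α β a τ : ℂ)
      = Complex.I * integrand ω α β a τ := by
  rw [oscillationDeriv, integrand, ← phaseDeriv_mul_reducedAmplitude hω hα hτ, Complex.ofReal_mul]
  ring

lemma norm_integral_integrand_eq_norm_integral_oscillationDeriv_smul (hω : 0 < ω) (hα : 0 < α)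
    (hs : 0 < s) (hsR : s ≤ R) :
    ‖∫ τ in s..R, integrand ω α β a τ‖
      = ‖∫ τ in s..R, oscillationDeriv ω a τ • (reducedAmplitude ω α β a τ : ℂ)‖ := by
  have integral_eq : ∫ τ in s..R, oscillationDeriv ω a τ • (reducedAmplitude ω α β a τ : ℂ)
      = ∫ τ in s..R, Complex.I * integrand ω α β a τ := by
    refine intervalIntegral.integral_congr fun τ hτ => ?_
    rw [uIcc_of_le hsR] at hτ
    exact oscillationDeriv_mul_reducedAmplitude hω hα (hs.trans_le hτ.1)
  rw [integral_eq, intervalIntegral.integral_const_mul, norm_mul, Complex.norm_I, one_mul]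

lemma norm_integral_integrand_le {p A : ℝ} (hω : 0 < ω) (hα : 0 < α) (hs : 0 < s) (hsR : s ≤ R)
    (hp : p ≠ 0) (hA : ∀ τ ∈ Icc s R, reducedAmplitude ω α β a τ ≤ A * τ ^ p) :
    ‖∫ τ in s..R, integrand ω α β a τ‖
      ≤ A * (2 + (|β| + 2) / |p|) * max (s ^ p) (R ^ p) := by
  have pos_of_mem {τ : ℝ} (hτ : τ ∈ Icc s R) : 0 < τ := hs.trans_le hτ.1
  have oscillationDeriv_integrable : IntervalIntegrable (oscillationDeriv ω a) volume s R :=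
    (continuousOn_oscillationDeriv.mono fun _ => pos_of_mem).intervalIntegrable_of_Icc hsR
  have amplitudeDeriv_integrable : IntervalIntegrable
      (fun τ => (reducedAmplitudeDeriv ω α β a τ : ℂ)) volume s R :=
    (Complex.continuous_ofReal.comp_continuousOn ((continuousOn_reducedAmplitudeDeriv hω hα).mono
      fun _ => pos_of_mem)).intervalIntegrable_of_Icc hsR
  rw [norm_integral_integrand_eq_norm_integral_oscillationDeriv_smul hω hα hs hsR, mul_add,
    mul_comm A 2, ← mul_div_assoc]
  refine norm_integral_deriv_smul_le_of_le_rpow hs hsR hp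
    (fun τ hτ => hasDerivAt_oscillation (pos_of_mem hτ).ne')
    (fun τ hτ => (hasDerivAt_reducedAmplitude hω hα (pos_of_mem hτ)).ofReal_comp)
    oscillationDeriv_integrable amplitudeDeriv_integrable (fun _ _ => norm_oscillation.le)
    (fun τ hτ => ?_) (fun τ hτ => ?_)
  · rw [Complex.norm_of_nonneg (reducedAmplitude_nonneg hω hα (pos_of_mem hτ))]
    exact hA τ hτ
  · have hτ0 := pos_of_mem hτ
    calc ‖(reducedAmplitudeDeriv ω α β a τ : ℂ)‖
        ≤ (|β| + 2) * (reducedAmplitude ω α β a τ / τ) := by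
          rw [Complex.norm_real]
          exact abs_reducedAmplitudeDeriv_le hω hα hτ0
      _ ≤ (|β| + 2) * (A * τ ^ p / τ) := by
          gcongr
          exact hA τ hτ
      _ = A * (|β| + 2) * τ ^ (p - 1) := by
          rw [Real.rpow_sub_one hτ0.ne']
          ring

lemma norm_integral_integrand_tail_le (hω : 0 < ω) (hα : 0 < α) (hβ : β < 2) (hs : 0 < s)
    (hsR : s ≤ R) :
    ‖∫ τ in s..R, integrand ω α β a τ‖
      ≤ 1 / (4 * α * ω) * (2 + (|β| + 2) / |β - 2|) * s ^ (β - 2) := by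
  have h := norm_integral_integrand_le hω hα hs hsR (sub_neg.2 hβ).ne fun τ hτ =>
    reducedAmplitude_le_rpow_sub_two (β := β) (a := a) hω hα (hs.trans_le hτ.1)
  rwa [max_eq_left (Real.rpow_le_rpow_of_nonpos hs hsR (sub_neg.2 hβ).le)] at h

lemma norm_integral_integrand_head_le (hω : 0 < ω) (hα : 0 < α) (hβ : -1 < β) (ha : 0 < a) :
    ‖∫ τ in (0 : ℝ)..a, integrand ω α β a τ‖
      ≤ 4 * (2 + (|β| + 2) / |β + 2|) * a ^ (β - 2) := by
  have hβ2 : 0 < β + 2 := by linarith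
  refine norm_integral_le_of_forall_Ioc ha
    (intervalIntegrable_integrand hα hβ ha.ne' 0 a) fun s hs => ?_
  have h := norm_integral_integrand_le hω hα hs.1 hs.2 hβ2.ne' fun τ hτ =>
    reducedAmplitude_le_rpow_add_two (β := β) hω hα ha.ne' (hs.1.trans_le hτ.1)
  rw [max_eq_right (Real.rpow_le_rpow hs.1.le hs.2 hβ2.le)] at h
  refine h.trans_eq ?_
  rw [rpow_add_two_eq_rpow_sub_two_mul ha.ne']
  field_simp

lemma tendsto_improperIntegral (hω : 0 < ω) (hα : 0 < α) (hβ : -1 < β) (hβ' : β < 2) (ha : a ≠ 0)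
    (t : ℝ) :
    Tendsto (fun R => ∫ τ in t..R, integrand ω α β a τ) atTop
      (𝓝 (improperIntegral ω α β t a)) := by
  have tail_bound_tendsto_zero : Tendsto
      (fun s : ℝ => 1 / (4 * α * ω) * (2 + (|β| + 2) / |β - 2|) * s ^ (β - 2)) atTop (𝓝 0) := by
    simpa using (tendsto_rpow_neg_atTop (sub_pos.2 hβ')).const_mul
      (1 / (4 * α * ω) * (2 + (|β| + 2) / |β - 2|))
  refine tendsto_nhds_limUnder (exists_tendsto_integral_atTop
    (intervalIntegrable_integrand hα hβ ha) tail_bound_tendsto_zero ?_ t)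
  filter_upwards [eventually_gt_atTop 0] with s hs R hsR
  exact norm_integral_integrand_tail_le hω hα hβ' hs hsR

lemma norm_improperIntegral_le (hω : 0 < ω) (hα : 0 < α) (hβ : -1 < β) (hβ' : β < 2) (ha : a ≠ 0)
    (ht : 0 < t) :
    ‖improperIntegral ω α β t a‖
      ≤ 1 / (4 * α * ω) * (2 + (|β| + 2) / |β - 2|) * t ^ (β - 2) := by
  refine le_of_tendsto (tendsto_improperIntegral hω hα hβ hβ' ha t).norm ?_
  filter_upwards [eventually_ge_atTop t] with R htR
  exact norm_integral_integrand_tail_le hω hα hβ' ht htR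

lemma integral_add_improperIntegral (hω : 0 < ω) (hα : 0 < α) (hβ : -1 < β) (hβ' : β < 2)
    (ha : a ≠ 0) (s t : ℝ) :
    (∫ τ in s..t, integrand ω α β a τ) + improperIntegral ω α β t a
      = improperIntegral ω α β s a := by
  have integrable := intervalIntegrable_integrand (ω := ω) hα hβ ha
  refine tendsto_nhds_unique ?_ (tendsto_improperIntegral hω hα hβ hβ' ha s)
  simpa only [intervalIntegral.integral_add_adjacent_intervals (integrable _ _) (integrable _ _)]
    using (tendsto_improperIntegral hω hα hβ hβ' ha t).const_add (∫ τ in s..t, integrand ω α β a τ)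

lemma norm_improperIntegral_zero_le (hω : 0 < ω) (hα : 0 < α) (hβ : -1 < β) (hβ' : β < 2)
    (ha : 0 < a) :
    ‖improperIntegral ω α β 0 a‖
      ≤ (4 * (2 + (|β| + 2) / |β + 2|) + 1 / (4 * α * ω) * (2 + (|β| + 2) / |β - 2|))
        * a ^ (β - 2) := by
  rw [← integral_add_improperIntegral hω hα hβ hβ' ha.ne' 0 a, add_mul]
  exact norm_add_le_of_le (norm_integral_integrand_head_le hω hα hβ ha)
    (norm_improperIntegral_le hω hα hβ hβ' ha.ne' ha)

end ScatteringIntegral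

open ScatteringIntegral in
theorem stmt_10_general (ω α β : ℝ) (hω : 0 < ω) (hα : 0 < α) (hβ : -1 < β) (hβ' : β < 2) :
    ∃ C > (0 : ℝ), ∃ I : ℝ → ℝ → ℂ,
      ∀ a : ℝ, 0 < a →
        (∀ t : ℝ, 0 ≤ t →
          Tendsto (fun R : ℝ => ∫ τ in t..R,
              Complex.exp (Complex.I * ((ω * τ - a ^ 2 / (4 * τ) : ℝ) : ℂ)) *
                ((τ ^ β / (a ^ 2 + 4 * α * τ ^ 2) : ℝ) : ℂ))
            atTop (nhds (I t a))) ∧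
        ‖I 0 a‖ ≤ C * a ^ (β - 2) ∧
        ∀ t : ℝ, 0 < t → ‖I t a‖ ≤ C * t ^ (β - 2) := by
  refine ⟨4 * (2 + (|β| + 2) / |β + 2|) + 1 / (4 * α * ω) * (2 + (|β| + 2) / |β - 2|),
    by positivity, improperIntegral ω α β, fun a ha => ⟨fun t _ => ?_, ?_, fun t ht => ?_⟩⟩
  · exact tendsto_improperIntegral hω hα hβ hβ' ha.ne' t
  · exact norm_improperIntegral_zero_le hω hα hβ hβ' ha
  · refine (norm_improperIntegral_le hω hα hβ hβ' ha.ne' ht).trans ?_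
    gcongr
    exact le_add_of_nonneg_left (by positivity)

/-- Oscillatory-integral bounds: the improper integral
`I(t,a) = lim_{R→∞} ∫ₜ^R e^{i(ωτ - a²/(4τ))} τ^{3/2}/(a² + 4ατ²) dτ` exists, with
`|I(0,a)| ≤ C a^{-1/2}` and `|I(t,a)| ≤ C t^{-1/2}` for `t > 0`. -/
theorem stmt_10 (ω α : ℝ) (hω : 0 < ω) (hα : 0 < α) :
    ∃ C > (0:ℝ), ∃ I : ℝ → ℝ → ℂ,
      ∀ a : ℝ, 0 < a →
        (∀ t : ℝ, 0 ≤ t →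
          Tendsto (fun R : ℝ => ∫ τ in t..R,
              Complex.exp (Complex.I * ((ω * τ - a ^ 2 / (4 * τ) : ℝ) : ℂ)) *
                ((τ ^ ((3:ℝ)/2) / (a ^ 2 + 4 * α * τ ^ 2) : ℝ) : ℂ))
            atTop (nhds (I t a))) ∧
        ‖I 0 a‖ ≤ C * a ^ (-(1:ℝ)/2) ∧
        ∀ t : ℝ, 0 < t → ‖I t a‖ ≤ C * t ^ (-(1:ℝ)/2) := by
  rw [show -(1:ℝ)/2 = 3/2 - 2 by norm_num]
  exact stmt_10_general ω α (3/2) hω hα (by norm_num) (by norm_num)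
end
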